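/- There exist constants c > 0 and ε > 0 and, for each n ≥ 1, a conjunctive query q_n and an OWL 2 QL TBox T_n with |q_n| ≤ c·n and |T_n| ≤ c·n, such that for all sufficiently large n, every NDL-rewriting for q_n and T_n over any signature containing the symbols of q_n and T_n has size at least 2^{ε·(n/log n)^{1/12}}. -/

import Mathlib

namespace QRew

/-! ### Boolean circuits.
A Boolean circuit with inputs indexed by `ι`, advice inputs indexed by `κ` and
gates `0, …, ℓ-1` (in topological order: each gate only uses earlier gates),
with a designated output gate.  Gates are labelled `¬` (one incoming edge),
`∧`/`∨` (two incoming edges) or are Boolean constants. -/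

inductive Wire (ι κ : Type) (ℓ : ℕ) : Type
  | input : ι → Wire ι κ ℓ
  | advice : κ → Wire ι κ ℓ
  | gate : Fin ℓ → Wire ι κ ℓ
  deriving DecidableEq

inductive GateDef (ι κ : Type) (ℓ : ℕ) : Type
  | tru : GateDef ι κ ℓ
  | fls : GateDef ι κ ℓ
  | not : Wire ι κ ℓ → GateDef ι κ ℓ
  | and : Wire ι κ ℓ → Wire ι κ ℓ → GateDef ι κ ℓ
  | or : Wire ι κ ℓ → Wire ι κ ℓ → GateDef ι κ ℓ

def Wire.gateBound {ι κ : Type} {ℓ : ℕ} : Wire ι κ ℓ → ℕ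
  | .gate g => g.val + 1
  | _ => 0

def GateDef.wires {ι κ : Type} {ℓ : ℕ} : GateDef ι κ ℓ → List (Wire ι κ ℓ)
  | .tru => []
  | .fls => []
  | .not w => [w]
  | .and w w' => [w, w']
  | .or w w' => [w, w']

structure Circuit (ι κ : Type) (ℓ : ℕ) where
  gate : Fin ℓ → GateDef ι κ ℓ
  out : Fin ℓ
  topo : ∀ i : Fin ℓ, ∀ w ∈ (gate i).wires, w.gateBound ≤ i.val

def Wire.evalWith {ι κ : Type} {ℓ : ℕ} (x : ι → Bool) (y : κ → Bool)
    (v : Fin ℓ → Bool) : Wire ι κ ℓ → Bool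
  | .input i => x i
  | .advice j => y j
  | .gate g => v g

def GateDef.evalWith {ι κ : Type} {ℓ : ℕ} (x : ι → Bool) (y : κ → Bool)
    (v : Fin ℓ → Bool) : GateDef ι κ ℓ → Bool
  | .tru => true
  | .fls => false
  | .not w => ! w.evalWith x y v
  | .and w w' => w.evalWith x y v && w'.evalWith x y v
  | .or w w' => w.evalWith x y v || w'.evalWith x y v

/-- The values of the gates of the circuit, computed in `k` rounds of
evaluation (by the topological-order condition, after `ℓ` rounds every gate
has its correct value). -/
def Circuit.gateVals {ι κ : Type} {ℓ : ℕ} (C : Circuit ι κ ℓ)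
    (x : ι → Bool) (y : κ → Bool) : ℕ → Fin ℓ → Bool
  | 0 => fun _ => false
  | (k + 1) => fun g => (C.gate g).evalWith x y (C.gateVals x y k)

/-- The output of gate `g` of the circuit on input `(x, y)`. -/
def Circuit.gateVal {ι κ : Type} {ℓ : ℕ} (C : Circuit ι κ ℓ)
    (x : ι → Bool) (y : κ → Bool) (g : Fin ℓ) : Bool :=
  C.gateVals x y ℓ g

/-- The output of the circuit on input `(x, y)`. -/
def Circuit.eval {ι κ : Type} {ℓ : ℕ} (C : Circuit ι κ ℓ)
    (x : ι → Bool) (y : κ → Bool) : Bool :=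
  C.gateVal x y C.out

/-- The size of a circuit: its number of nodes (inputs, advice inputs and gates). -/
noncomputable def Circuit.size {ι κ : Type} {ℓ : ℕ} (_ : Circuit ι κ ℓ) : ℕ :=
  Nat.card ι + Nat.card κ + ℓ

/-- A monotone circuit: one with no `¬`-gates. -/
def Circuit.MonotoneC {ι κ : Type} {ℓ : ℕ} (C : Circuit ι κ ℓ) : Prop :=
  ∀ (g : Fin ℓ) (w : Wire ι κ ℓ), C.gate g ≠ .not w

/-- A circuit using only `¬`- and `∧`-gates. -/
def Circuit.OnlyNotAnd {ι κ : Type} {ℓ : ℕ} (C : Circuit ι κ ℓ) : Prop :=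
  ∀ g : Fin ℓ, (∃ w, C.gate g = .not w) ∨ (∃ w w', C.gate g = .and w w')

/-- `C` nondeterministically computes `f` : for every input `a`,
`f a = 1` iff `C(a, b) = 1` for some advice `b`. -/
def NondetComputes {ι κ : Type} {ℓ : ℕ} (C : Circuit ι κ ℓ)
    (f : (ι → Bool) → Bool) : Prop :=
  ∀ a : ι → Bool, (f a = true ↔ ∃ b : κ → Bool, C.eval a b = true)

/-- A monotone Boolean function. -/
def MonotoneFun {ι : Type} (f : (ι → Bool) → Bool) : Prop :=
  ∀ a b : ι → Bool, (∀ i, a i = true → b i = true) → f a = true → f b = true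

/-! ### Boolean formulas -/

inductive BForm (V : Type) : Type
  | var : V → BForm V
  | tru : BForm V
  | fls : BForm V
  | not : BForm V → BForm V
  | and : BForm V → BForm V → BForm V
  | or : BForm V → BForm V → BForm V

def BForm.eval {V : Type} (v : V → Bool) : BForm V → Bool
  | .var x => v x
  | .tru => true
  | .fls => false
  | .not φ => ! φ.eval v
  | .and φ ψ => φ.eval v && ψ.eval v
  | .or φ ψ => φ.eval v || ψ.eval v

/-- Truth of a Boolean formula under a `Prop`-valued assignment of the variables. -/
def BForm.holds {V : Type} (v : V → Prop) : BForm V → Prop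
  | .var x => v x
  | .tru => True
  | .fls => False
  | .not φ => ¬ φ.holds v
  | .and φ ψ => φ.holds v ∧ ψ.holds v
  | .or φ ψ => φ.holds v ∨ ψ.holds v

/-- A monotone Boolean formula: no `¬`. -/
def BForm.MonotoneF {V : Type} : BForm V → Prop
  | .var _ => True
  | .tru => True
  | .fls => True
  | .not _ => False
  | .and φ ψ => φ.MonotoneF ∧ ψ.MonotoneF
  | .or φ ψ => φ.MonotoneF ∧ ψ.MonotoneF

def BForm.size {V : Type} : BForm V → ℕ
  | .var _ => 1
  | .tru => 1
  | .fls => 1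
  | .not φ => 1 + φ.size
  | .and φ ψ => 1 + φ.size + ψ.size
  | .or φ ψ => 1 + φ.size + ψ.size

def BForm.Computes {V : Type} (φ : BForm V) (f : (V → Bool) → Bool) : Prop :=
  ∀ v : V → Bool, φ.eval v = f v

end QRew
namespace QRew

/-! ### OWL 2 QL: syntax and semantics.

A signature consists of individual constants (a type `K`), concept names
(a type `CN`) and role names (a type `RN`). -/

/-- Roles: role names and their inverses. -/
inductive Role (RN : Type) : Type
  | pos : RN → Role RN
  | inv : RN → Role RN

/-- Basic concepts: `⊥`, concept names, `∃R`. -/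
inductive BCon (CN RN : Type) : Type
  | bot : BCon CN RN
  | atom : CN → BCon CN RN
  | exr : Role RN → BCon CN RN

/-- Concepts: basic concepts and `∃R.B`. -/
inductive Con (CN RN : Type) : Type
  | bc : BCon CN RN → Con CN RN
  | exrb : Role RN → BCon CN RN → Con CN RN

/-- OWL 2 QL TBox axioms: `B ⊑ C`, `R₁ ⊑ R₂`, `B₁ ⊓ B₂ ⊑ ⊥`, `R₁ ⊓ R₂ ⊑ ⊥`. -/
inductive Ax (CN RN : Type) : Type
  | sub : BCon CN RN → Con CN RN → Ax CN RN
  | rsub : Role RN → Role RN → Ax CN RN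
  | disj : BCon CN RN → BCon CN RN → Ax CN RN
  | rdisj : Role RN → Role RN → Ax CN RN

/-- A first-order interpretation of the signature `(K, CN, RN)`,
with a nonempty domain. -/
structure Interp (K CN RN : Type) where
  Dom : Type
  ne : Nonempty Dom
  ind : K → Dom
  conc : CN → Dom → Prop
  role : RN → Dom → Dom → Prop

def Role.sem {K CN RN : Type} (I : Interp K CN RN) : Role RN → I.Dom → I.Dom → Prop
  | .pos P => I.role P
  | .inv P => fun u v => I.role P v u

def BCon.sem {K CN RN : Type} (I : Interp K CN RN) : BCon CN RN → I.Dom → Prop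
  | .bot => fun _ => False
  | .atom A => I.conc A
  | .exr R => fun u => ∃ v, R.sem I u v

def Con.sem {K CN RN : Type} (I : Interp K CN RN) : Con CN RN → I.Dom → Prop
  | .bc B => B.sem I
  | .exrb R B => fun u => ∃ v, R.sem I u v ∧ B.sem I v

def Ax.sem {K CN RN : Type} (I : Interp K CN RN) : Ax CN RN → Prop
  | .sub B c => ∀ u, B.sem I u → c.sem I u
  | .rsub R R' => ∀ u v, R.sem I u v → R'.sem I u v
  | .disj B B' => ∀ u, B.sem I u → B'.sem I u → False
  | .rdisj R R' => ∀ u v, R.sem I u v → R'.sem I u v → False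

/-- Ground atoms (ABox assertions). -/
inductive GAtom (K CN RN : Type) : Type
  | conc : CN → K → GAtom K CN RN
  | role : RN → K → K → GAtom K CN RN

def GAtom.sem {K CN RN : Type} (I : Interp K CN RN) : GAtom K CN RN → Prop
  | .conc A a => I.conc A (I.ind a)
  | .role P a b => I.role P (I.ind a) (I.ind b)

/-- An ABox: a finite set (list) of ground atoms. -/
abbrev ABox (K CN RN : Type) := List (GAtom K CN RN)

/-- First-order terms over the constants `K`. -/
inductive Term (K : Type) : Type
  | var : ℕ → Term K
  | const : K → Term K
  deriving DecidableEq

def Term.sem {K CN RN : Type} (I : Interp K CN RN) (v : ℕ → I.Dom) : Term K → I.Dom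
  | .var x => v x
  | .const a => I.ind a

/-- Atoms of conjunctive queries. -/
inductive CQAtom (K CN RN : Type) : Type
  | conc : CN → Term K → CQAtom K CN RN
  | role : RN → Term K → Term K → CQAtom K CN RN

def CQAtom.sem {K CN RN : Type} (I : Interp K CN RN) (v : ℕ → I.Dom) :
    CQAtom K CN RN → Prop
  | .conc A t => I.conc A (t.sem I v)
  | .role P t t' => I.role P (t.sem I v) (t'.sem I v)

/-- A Boolean conjunctive query: a list of atoms, all of whose variables are
(implicitly) existentially quantified. -/
abbrev CQ (K CN RN : Type) := List (CQAtom K CN RN)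

def CQ.sem {K CN RN : Type} (I : Interp K CN RN) (q : CQ K CN RN) : Prop :=
  have := I.ne
  ∃ v : ℕ → I.Dom, ∀ a ∈ q, a.sem I v

/-- Certain answer to a Boolean CQ: `(T, A) ⊨ q` iff `q` holds in every
first-order model of `T ∪ A`. -/
def Entails {K CN RN : Type} (T : List (Ax CN RN)) (A : ABox K CN RN)
    (q : CQ K CN RN) : Prop :=
  ∀ I : Interp K CN RN, (∀ ax ∈ T, ax.sem I) → (∀ g ∈ A, g.sem I) → CQ.sem I q

/-- The interpretation `I_A` of an ABox `A`: its domain consists of all the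
constants of the signature and a ground atom holds in it iff it belongs to `A`. -/
def IA {K CN RN : Type} [hK : Nonempty K] (A : ABox K CN RN) : Interp K CN RN where
  Dom := K
  ne := hK
  ind := id
  conc := fun c a => GAtom.conc c a ∈ A
  role := fun P a b => GAtom.role P a b ∈ A

/-! ### First-order formulas over a signature (no built-in predicates,
in particular no equality). -/

inductive FO (K CN RN : Type) : Type
  | conc : CN → Term K → FO K CN RN
  | role : RN → Term K → Term K → FO K CN RN
  | and : FO K CN RN → FO K CN RN → FO K CN RN
  | or : FO K CN RN → FO K CN RN → FO K CN RN
  | not : FO K CN RN → FO K CN RN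
  | ex : ℕ → FO K CN RN → FO K CN RN
  | all : ℕ → FO K CN RN → FO K CN RN

def FO.sem {K CN RN : Type} (I : Interp K CN RN) (v : ℕ → I.Dom) : FO K CN RN → Prop
  | .conc A t => I.conc A (t.sem I v)
  | .role P t t' => I.role P (t.sem I v) (t'.sem I v)
  | .and φ ψ => φ.sem I v ∧ ψ.sem I v
  | .or φ ψ => φ.sem I v ∨ ψ.sem I v
  | .not φ => ¬ φ.sem I v
  | .ex x φ => ∃ u : I.Dom, φ.sem I (Function.update v x u)
  | .all x φ => ∀ u : I.Dom, φ.sem I (Function.update v x u)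

/-- Truth of a formula in an interpretation (for sentences this is the usual
notion of truth; free variables are read universally). -/
def FO.holds {K CN RN : Type} (I : Interp K CN RN) (φ : FO K CN RN) : Prop :=
  ∀ v : ℕ → I.Dom, φ.sem I v

def Term.fv {K : Type} : Term K → Set ℕ
  | .var x => {x}
  | .const _ => ∅

/-- Free variables of a first-order formula. -/
def FO.free {K CN RN : Type} : FO K CN RN → Set ℕ
  | .conc _ t => t.fv
  | .role _ t t' => t.fv ∪ t'.fv
  | .and φ ψ => φ.free ∪ ψ.free
  | .or φ ψ => φ.free ∪ ψ.free
  | .not φ => φ.free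
  | .ex x φ => φ.free \ {x}
  | .all x φ => φ.free \ {x}

/-- Positive existential formulas: built from atoms using only `∧`, `∨`, `∃`. -/
def FO.IsPE {K CN RN : Type} : FO K CN RN → Prop
  | .conc _ _ => True
  | .role _ _ _ => True
  | .and φ ψ => φ.IsPE ∧ ψ.IsPE
  | .or φ ψ => φ.IsPE ∧ ψ.IsPE
  | .not _ => False
  | .ex _ φ => φ.IsPE
  | .all _ _ => False

/-- The size (number of symbols) of a first-order formula. -/
def FO.size {K CN RN : Type} : FO K CN RN → ℕ
  | .conc _ _ => 2
  | .role _ _ _ => 3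
  | .and φ ψ => 3 + φ.size + ψ.size
  | .or φ ψ => 3 + φ.size + ψ.size
  | .not φ => 1 + φ.size
  | .ex _ φ => 2 + φ.size
  | .all _ φ => 2 + φ.size

/-- `q'` is an FO-rewriting for the Boolean CQ `q` and the TBox `T` over the
signature `(K, CN, RN)`: for every ABox `A` over the signature,
`(T, A) ⊨ q` iff `I_A ⊨ q'`. -/
def IsFORewriting {K CN RN : Type} [Nonempty K] (T : List (Ax CN RN))
    (q : CQ K CN RN) (q' : FO K CN RN) : Prop :=
  ∀ A : ABox K CN RN, Entails T A q ↔ FO.holds (IA A) q'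

/-- A positive existential (PE-) rewriting. -/
def IsPERewriting {K CN RN : Type} [Nonempty K] (T : List (Ax CN RN))
    (q : CQ K CN RN) (q' : FO K CN RN) : Prop :=
  IsFORewriting T q q' ∧ q'.IsPE

/-! Sizes of TBoxes and queries (numbers of symbols). -/

def BCon.size {CN RN : Type} : BCon CN RN → ℕ
  | .bot => 1
  | .atom _ => 1
  | .exr _ => 2

def Con.size {CN RN : Type} : Con CN RN → ℕ
  | .bc B => B.size
  | .exrb _ B => 2 + B.size

def Ax.size {CN RN : Type} : Ax CN RN → ℕ
  | .sub B c => 1 + B.size + c.size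
  | .rsub _ _ => 3
  | .disj B B' => 2 + B.size + B'.size
  | .rdisj _ _ => 4

def tbSize {CN RN : Type} (T : List (Ax CN RN)) : ℕ := (T.map Ax.size).sum

def CQAtom.size {K CN RN : Type} : CQAtom K CN RN → ℕ
  | .conc _ _ => 2
  | .role _ _ _ => 3

def cqSize {K CN RN : Type} (q : CQ K CN RN) : ℕ := (q.map CQAtom.size).sum

/-! Maps of syntax along signature inclusions. -/

def Role.map {RN RN' : Type} (fR : RN → RN') : Role RN → Role RN'
  | .pos P => .pos (fR P)
  | .inv P => .inv (fR P)

def BCon.map {CN RN CN' RN' : Type} (fC : CN → CN') (fR : RN → RN') :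
    BCon CN RN → BCon CN' RN'
  | .bot => .bot
  | .atom A => .atom (fC A)
  | .exr R => .exr (R.map fR)

def Con.map {CN RN CN' RN' : Type} (fC : CN → CN') (fR : RN → RN') :
    Con CN RN → Con CN' RN'
  | .bc B => .bc (B.map fC fR)
  | .exrb R B => .exrb (R.map fR) (B.map fC fR)

def Ax.map {CN RN CN' RN' : Type} (fC : CN → CN') (fR : RN → RN') :
    Ax CN RN → Ax CN' RN'
  | .sub B c => .sub (B.map fC fR) (c.map fC fR)
  | .rsub R R' => .rsub (R.map fR) (R'.map fR)
  | .disj B B' => .disj (B.map fC fR) (B'.map fC fR)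
  | .rdisj R R' => .rdisj (R.map fR) (R'.map fR)

def Term.map {K K' : Type} (fK : K → K') : Term K → Term K'
  | .var x => .var x
  | .const a => .const (fK a)

def CQAtom.map {K CN RN K' CN' RN' : Type} (fK : K → K') (fC : CN → CN')
    (fR : RN → RN') : CQAtom K CN RN → CQAtom K' CN' RN'
  | .conc A t => .conc (fC A) (t.map fK)
  | .role P t t' => .role (fR P) (t.map fK) (t'.map fK)

def CQ.map {K CN RN K' CN' RN' : Type} (fK : K → K') (fC : CN → CN')
    (fR : RN → RN') (q : CQ K CN RN) : CQ K' CN' RN' :=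
  List.map (CQAtom.map fK fC fR) q

instance sumNonemptyLeft {α β : Type} [Nonempty α] : Nonempty (α ⊕ β) :=
  ⟨Sum.inl (Classical.arbitrary α)⟩

end QRew
namespace QRew

/-! ### Nonrecursive Datalog.

A Datalog program over the constants `K` uses the predicates of the data
signature (the concept names `CN` and role names `RN`) together with
arbitrary further predicates `E`. -/

/-- The predicates available to a Datalog program over the signature
`(CN, RN)` with extra (non-signature) predicates `E`. -/
abbrev DPred (CN RN E : Type) : Type := (CN ⊕ RN) ⊕ E

/-- A Datalog atom : a predicate applied to a list of terms. -/
structure DAtom (K PV : Type) : Type where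
  pred : PV
  args : List (Term K)

/-- A Horn clause `∀x̄ (A₁ ∧ … ∧ A_m → A₀)`. -/
structure DClause (K PV : Type) : Type where
  head : DAtom K PV
  body : List (DAtom K PV)

/-- A Datalog program : a finite set (list) of Horn clauses. -/
abbrev DProgram (K PV : Type) := List (DClause K PV)

/-- An interpretation of the constants `K` and the predicates `PV`. -/
structure DInterp (K PV : Type) where
  Dom : Type
  ne : Nonempty Dom
  ind : K → Dom
  pred : PV → List Dom → Prop

def Term.semD {K : Type} {Dom : Type} (ind : K → Dom) (v : ℕ → Dom) : Term K → Dom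
  | .var x => v x
  | .const a => ind a

def DAtom.sem {K PV : Type} (M : DInterp K PV) (v : ℕ → M.Dom) (a : DAtom K PV) : Prop :=
  M.pred a.pred (a.args.map (Term.semD M.ind v))

def DClause.sem {K PV : Type} (M : DInterp K PV) (cl : DClause K PV) : Prop :=
  ∀ v : ℕ → M.Dom, (∀ a ∈ cl.body, a.sem M v) → cl.head.sem M v

/-- Datalog safety: every variable of the head occurs in the body. -/
def DClause.Safe {K PV : Type} (cl : DClause K PV) : Prop :=
  ∀ x : ℕ, Term.var x ∈ cl.head.args → ∃ a ∈ cl.body, Term.var x ∈ a.args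

/-- A pure clause: no constants occur in its head. -/
def DClause.Pure {K PV : Type} (cl : DClause K PV) : Prop :=
  ∀ k : K, Term.const k ∉ cl.head.args

/-- `p` depends on `q` in `Π`: some clause of `Prog` has head predicate `p` and
an occurrence of `q` in its body. -/
def DepOn {K PV : Type} (Prog : DProgram K PV) (pq q : PV) : Prop :=
  ∃ cl ∈ Prog, cl.head.pred = pq ∧ ∃ a ∈ cl.body, a.pred = q

/-- A nonrecursive program : the dependency relation is acyclic. -/
def Nonrec {K PV : Type} (Prog : DProgram K PV) : Prop :=
  ∀ pq : PV, ¬ Relation.TransGen (DepOn Prog) pq pq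

/-- A ground ABox atom read as a Datalog fact. -/
def GAtom.semD {K CN RN E : Type} (M : DInterp K (DPred CN RN E)) :
    GAtom K CN RN → Prop
  | .conc A a => M.pred (.inl (.inl A)) [M.ind a]
  | .role P a b => M.pred (.inl (.inr P)) [M.ind a, M.ind b]

/-- `Prog, A ⊨ G` for a propositional (nullary) goal `G` : `G` holds in every
model of `Prog ∪ A`. -/
def DEntails {K CN RN E : Type} (Prog : DProgram K (DPred CN RN E))
    (A : ABox K CN RN) (G : DPred CN RN E) : Prop :=
  ∀ M : DInterp K (DPred CN RN E),
    (∀ cl ∈ Prog, cl.sem M) → (∀ g ∈ A, g.semD M) → M.pred G []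

/-- `(Prog, G)` is an NDL-rewriting for the Boolean CQ `q` and TBox `T` over the
signature `(K, CN, RN)` : it is a pure nonrecursive Datalog query (possibly
using extra predicates `E`, but no non-signature constants) such that, for
every ABox `A` over the signature, `(T, A) ⊨ q` iff `Prog, A ⊨ G`. -/
def IsNDLRewriting {K CN RN E : Type} (T : List (Ax CN RN)) (q : CQ K CN RN)
    (Prog : DProgram K (DPred CN RN E)) (G : DPred CN RN E) : Prop :=
  (∀ cl ∈ Prog, cl.Safe ∧ cl.Pure) ∧ Nonrec Prog ∧
    ∀ A : ABox K CN RN, (Entails T A q ↔ DEntails Prog A G)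

/-- The size (number of symbols) of a Datalog atom. -/
def DAtom.size {K PV : Type} (a : DAtom K PV) : ℕ := 1 + a.args.length

def DClause.size {K PV : Type} (cl : DClause K PV) : ℕ :=
  1 + cl.head.size + (cl.body.map DAtom.size).sum

/-- The size (number of symbols) of a Datalog program. -/
def progSize {K PV : Type} (Prog : DProgram K PV) : ℕ := (Prog.map DClause.size).sum

end QRew

namespace QRew

/-! ### Approximation of monotone computations by small monomials and clauses -/

section Approximation

variable {X : Type} [DecidableEq X]

/-- The sets with fewer than `k` elements that meet every member of `F`. -/
def transversals (k : ℕ) (F : Set (Finset X)) : Set (Finset X) :=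
  {m | m.card < k ∧ ∀ c ∈ F, (m ∩ c).Nonempty}

theorem exists_branching (F : Set (Finset X)) (s : ℕ) (hF : ∀ c ∈ F, c.card ≤ s) (k : ℕ) :
    ∀ m₀ : Finset X, ∃ D : Finset (Finset X), D.card ≤ s ^ k ∧
      (∀ m ∈ D, m.card = m₀.card + k) ∧
      ∀ x : Finset X, m₀ ⊆ x → (∀ c ∈ F, (x ∩ c).Nonempty) →
        (∃ m ∈ transversals (m₀.card + k) F, m ⊆ x) ∨ ∃ m ∈ D, m ⊆ x := by
  induction k with
  | zero =>
    intro m₀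
    exact ⟨{m₀}, by simp, by simp, fun x hx _ => Or.inr ⟨m₀, by simp, hx⟩⟩
  | succ k ih =>
    intro m₀
    by_cases hm : ∀ c ∈ F, (m₀ ∩ c).Nonempty
    · exact ⟨∅, by simp, by simp, fun x hx _ => Or.inl ⟨m₀, ⟨by omega, hm⟩, hx⟩⟩
    · push Not at hm
      obtain ⟨c, hc, hmc⟩ := hm
      choose D hcard hsize hcover using ih
      refine ⟨c.biUnion fun e => D (insert e m₀), ?_, ?_, ?_⟩
      · calc (c.biUnion fun e => D (insert e m₀)).card
            ≤ c.card * s ^ k := Finset.card_biUnion_le_card_mul _ _ _ fun e _ => hcard _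
          _ ≤ s * s ^ k := Nat.mul_le_mul_right _ (hF c hc)
          _ = s ^ (k + 1) := by ring
      · intro m hm
        obtain ⟨e, he, hm⟩ := Finset.mem_biUnion.1 hm
        have hem : e ∉ m₀ := fun h => by
          have : e ∈ m₀ ∩ c := Finset.mem_inter.2 ⟨h, he⟩
          rw [hmc] at this
          simp at this
        rw [hsize _ m hm, Finset.card_insert_of_notMem hem]
        ring
      · intro x hx hxF
        obtain ⟨e, he⟩ := hxF c hc
        obtain ⟨hex, hec⟩ := Finset.mem_inter.1 he
        have hem : e ∉ m₀ := fun h => by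
          have : e ∈ m₀ ∩ c := Finset.mem_inter.2 ⟨h, hec⟩
          rw [hmc] at this
          simp at this
        have h := hcover (insert e m₀) x (Finset.insert_subset hex hx) hxF
        rw [Finset.card_insert_of_notMem hem, add_assoc, add_comm 1 k] at h
        rcases h with h | ⟨m, hm, hmx⟩
        · exact Or.inl h
        · exact Or.inr ⟨m, Finset.mem_biUnion.2 ⟨e, hec, hm⟩, hmx⟩

/-- The monotone switching lemma: a CNF with clauses of at most `s` variables agrees with a
DNF with monomials of fewer than `r` variables, up to at most `s ^ r` monomials of `r`
variables. -/
theorem exists_switching (F : Set (Finset X)) (s r : ℕ) (hF : ∀ c ∈ F, c.card ≤ s) :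
    ∃ D : Finset (Finset X), D.card ≤ s ^ r ∧ (∀ m ∈ D, m.card = r) ∧
      ∀ x : Finset X, (∀ c ∈ F, (x ∩ c).Nonempty) →
        (∃ m ∈ transversals r F, m ⊆ x) ∨ ∃ m ∈ D, m ⊆ x := by
  obtain ⟨D, h₁, h₂, h₃⟩ := exists_branching F s hF r ∅
  refine ⟨D, h₁, by simpa using h₂, fun x hx => ?_⟩
  simpa using h₃ x (by simp) hx

end Approximation

/-! ### Nonrecursive Datalog programs over data with a single individual -/

section Datalog

variable {K PV X : Type}

theorem Nonrec.wellFounded {Prog : DProgram K PV} (h : Nonrec Prog) :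
    WellFounded fun q p => DepOn Prog p q := by
  classical
  have hfin : ∀ p, {q | Relation.TransGen (DepOn Prog) p q}.Finite := fun p => by
    refine Set.Finite.subset
      (((Prog.flatMap fun cl => cl.body.map DAtom.pred).toFinset).finite_toSet) ?_
    intro q hq
    obtain ⟨p', -, cl, hcl, -, b, hb, rfl⟩ := Relation.TransGen.tail'_iff.1 hq
    simp only [List.coe_toFinset, List.mem_flatMap, List.mem_map, Set.mem_ofPred_eq]
    exact ⟨cl, hcl, b, hb, rfl⟩
  refine Subrelation.wf (r := InvImage (· < ·)
    fun p => {q | Relation.TransGen (DepOn Prog) p q}.ncard) ?_ (InvImage.wf _ wellFounded_lt)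
  intro q p hpq
  refine Set.ncard_lt_ncard ⟨fun q' hq' => Relation.TransGen.head hpq hq', fun hsub => ?_⟩ (hfin p)
  exact h q (hsub (Relation.TransGen.single hpq))

/-- The only constant in the body of the clause is `a`. -/
def DClause.BodyOver (a : K) (cl : DClause K PV) : Prop :=
  ∀ b ∈ cl.body, ∀ k, Term.const k ∈ b.args → k = a

variable [DecidableEq X]

/-- The conjunction of the CNFs attached to the body atoms of a clause. -/
def bodyCnf (s : ℕ) (dnf : PV → ℕ → Set (Finset X)) (cl : DClause K PV) : Set (Finset X) :=
  {c | ∃ b ∈ cl.body, c ∈ transversals s (dnf b.pred b.args.length)}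

theorem exists_dnf {Prog : DProgram K PV} (h : Nonrec Prog) (a : K) (r s : ℕ)
    (edb : PV → ℕ → Option (Finset X)) :
    ∃ dnf : PV → ℕ → Set (Finset X), ∀ p k m, m ∈ dnf p k ↔ edb p k = some m ∨
      ∃ cl ∈ Prog, cl.head.pred = p ∧ cl.head.args.length = k ∧ cl.BodyOver a ∧
        m ∈ transversals r (bodyCnf s dnf cl) := by
  let step : ∀ p, (∀ q, DepOn Prog p q → ℕ → Set (Finset X)) → ℕ → Set (Finset X) :=
    fun p ih k => {m | edb p k = some m ∨
      ∃ cl, ∃ hcl : cl ∈ Prog, ∃ hp : cl.head.pred = p, cl.head.args.length = k ∧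
        cl.BodyOver a ∧ m ∈ transversals r {c | ∃ b, ∃ hb : b ∈ cl.body,
          c ∈ transversals s (ih b.pred ⟨cl, hcl, hp, b, hb, rfl⟩ b.args.length)}}
  refine ⟨h.wellFounded.fix step, fun p k m => ?_⟩
  rw [WellFounded.fix_eq]
  simp only [step, Set.mem_ofPred_eq, exists_prop, bodyCnf]

theorem ndl_approximation [Fintype X] {Prog : DProgram K PV}
    (hsafe : ∀ cl ∈ Prog, cl.Safe ∧ cl.Pure)
    (hrec : Nonrec Prog) (a : K) (G : PV) (r s : ℕ) (hr : 2 ≤ r) (hs : 2 ≤ s)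
    (edb : PV → ℕ → Option (Finset X)) (hedb : ∀ p k m, edb p k = some m → m.card ≤ 1) :
    ∃ D C : Finset (Finset X),
      D.card ≤ Prog.length * s ^ r ∧ (∀ m ∈ D, m.card = r) ∧
      C.card ≤ Prog.length * r ^ s ∧ (∀ c ∈ C, c.card = s) ∧
      ((∀ x : Finset X, (∀ M : DInterp K PV, (∀ cl ∈ Prog, cl.sem M) →
            (∀ p k m, edb p k = some m → m ⊆ x → M.pred p (List.replicate k (M.ind a))) →
            M.pred G []) → ∃ m ∈ D, m ⊆ x) ∨
        ∃ m₀ : Finset X, m₀.card < r ∧ ∀ x : Finset X, m₀ ⊆ x →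
          ∀ M : DInterp K PV, (∀ cl ∈ Prog, cl.sem M) →
            (∀ p k m, edb p k = some m → m ⊆ x → M.pred p (List.replicate k (M.ind a))) →
            ¬ M.pred G [] → ∃ c ∈ C, Disjoint c x) := by
  obtain ⟨dnf, hdnf⟩ := exists_dnf hrec a r s edb
  have hdnf_card : ∀ p k, ∀ m ∈ dnf p k, m.card ≤ r := by
    intro p k m hm
    rcases (hdnf p k m).1 hm with h | ⟨cl, -, -, -, -, h⟩
    · have := hedb p k m h
      omega
    · exact h.1.le
  have hcnf_card : ∀ cl : DClause K PV, ∀ c ∈ bodyCnf s dnf cl, c.card ≤ s := by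
    rintro cl c ⟨b, -, hc⟩
    exact hc.1.le
  choose D hDcard hDsize hD using
    fun cl : DClause K PV => exists_switching (bodyCnf s dnf cl) s r (hcnf_card cl)
  choose C hCcard hCsize hC using
    fun p k => exists_switching (dnf p k) r s (hdnf_card p k)
  have hunion : ∀ (f : DClause K PV → Finset (Finset X)) (N : ℕ), (∀ cl, (f cl).card ≤ N) →
      ∀ L : List (DClause K PV), ∃ U : Finset (Finset X), U.card ≤ L.length * N ∧
        ∀ m, m ∈ U ↔ ∃ cl ∈ L, m ∈ f cl := by
    intro f N hf L
    induction L with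
    | nil => exact ⟨∅, by simp, by simp⟩
    | cons cl L ih =>
      obtain ⟨U, hU, hmem⟩ := ih
      refine ⟨f cl ∪ U, ?_, fun m => by simp [hmem]⟩
      calc (f cl ∪ U).card ≤ (f cl).card + U.card := Finset.card_union_le _ _
        _ ≤ N + L.length * N := Nat.add_le_add (hf cl) hU
        _ = (cl :: L).length * N := by simp; ring
  obtain ⟨D', hD'card, hD'⟩ := hunion D (s ^ r) hDcard Prog
  obtain ⟨C', hC'card, hC'⟩ := hunion (fun cl => C cl.head.pred cl.head.args.length) (r ^ s)
    (fun cl => hCcard _ _) Prog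
  refine ⟨D', C', hD'card, ?_, hC'card, ?_, ?_⟩
  · intro m hm
    obtain ⟨cl, -, hm⟩ := (hD' m).1 hm
    exact hDsize cl m hm
  · intro c hc
    obtain ⟨cl, -, hc⟩ := (hC' c).1 hc
    exact hCsize _ _ c hc
  by_cases hG : ∃ m₀, m₀ ∈ dnf G 0
  · right
    obtain ⟨m₀, hm₀⟩ := hG
    have hm₀r : m₀.card < r := by
      rcases (hdnf G 0 m₀).1 hm₀ with h | ⟨cl, -, -, -, -, h⟩
      · have := hedb _ _ _ h
        omega
      · exact h.1
    refine ⟨m₀, hm₀r, fun x hx M hM hfact hMG => ?_⟩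
    by_contra! hno
    have key : ∀ p k, (∀ c ∈ transversals s (dnf p k), (c ∩ x).Nonempty) →
        M.pred p (List.replicate k (M.ind a)) := by
      intro p
      induction p using hrec.wellFounded.induction with
      | _ p ih =>
      intro k hcnf
      have hacc : ∃ m ∈ dnf p k, m ⊆ x := by
        by_contra! hrej
        have hhit : ∀ m ∈ dnf p k, (xᶜ ∩ m).Nonempty := by
          intro m hm
          obtain ⟨e, hem, hex⟩ := Finset.not_subset.1 (hrej m hm)
          exact ⟨e, by simp [hem, hex]⟩
        by_cases hhead : ∃ cl ∈ Prog, cl.head.pred = p ∧ cl.head.args.length = k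
        · obtain ⟨cl, hcl, rfl, rfl⟩ := hhead
          rcases hC _ _ xᶜ hhit with ⟨c, hc, hcx⟩ | ⟨c, hc, hcx⟩
          · obtain ⟨e, he⟩ := hcnf c hc
            rw [Finset.mem_inter] at he
            exact Finset.mem_compl.1 (hcx he.1) he.2
          · refine hno c ((hC' c).2 ⟨cl, hcl, hc⟩) ?_
            exact Finset.disjoint_left.2 fun e he => Finset.mem_compl.1 (hcx he)
        · have hd : ∀ m, m ∈ dnf p k ↔ edb p k = some m := by
            intro m
            rw [hdnf]
            refine ⟨fun h => h.resolve_right ?_, Or.inl⟩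
            rintro ⟨cl, hcl, h₁, h₂, -⟩
            exact hhead ⟨cl, hcl, h₁, h₂⟩
          cases hm : edb p k with
          | none =>
            obtain ⟨e, he⟩ := hcnf ∅ ⟨by simp; omega, fun m hm' => by simp [hd, hm] at hm'⟩
            simp at he
          | some m =>
            obtain ⟨e, he⟩ := hhit m ((hd m).2 hm)
            rw [Finset.mem_inter, Finset.mem_compl] at he
            obtain ⟨e', he'⟩ := hcnf {e} ⟨by simp; omega, fun m' hm' => by
              rw [hd, hm, Option.some_inj] at hm'
              subst hm'
              exact ⟨e, by simp [he.2]⟩⟩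
            rw [Finset.mem_inter, Finset.mem_singleton] at he'
            exact he.1 (he'.1 ▸ he'.2)
      obtain ⟨m, hm, hmx⟩ := hacc
      rcases (hdnf p k m).1 hm with h | ⟨cl, hcl, hp, hk, hover, htr⟩
      · exact hfact p k m h hmx
      · have hpt : ∀ (l : List (Term K)), (∀ k', Term.const k' ∈ l → k' = a) →
            l.map (Term.semD M.ind fun _ => M.ind a) = List.replicate l.length (M.ind a) := by
          intro l hl
          refine List.eq_replicate_iff.2 ⟨by simp, fun u hu => ?_⟩
          obtain ⟨t, ht, rfl⟩ := List.mem_map.1 hu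
          cases t with
          | var _ => rfl
          | const k' =>
            rw [hl k' ht]
            rfl
        have := hM cl hcl (fun _ => M.ind a) fun b hb => by
          rw [DAtom.sem, hpt _ (hover b hb)]
          refine ih b.pred ⟨cl, hcl, hp, b, hb, rfl⟩ _ fun c hc => ?_
          obtain ⟨e, he⟩ := htr.2 c ⟨b, hb, hc⟩
          rw [Finset.mem_inter] at he
          exact ⟨e, Finset.mem_inter.2 ⟨he.2, hmx he.1⟩⟩
        rw [DAtom.sem, hpt _ fun k' hk' => absurd hk' ((hsafe cl hcl).2 k'), hp, hk] at this
        exact this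
    refine hMG (key G 0 fun c hc => ?_)
    obtain ⟨e, he⟩ := hc.2 m₀ hm₀
    rw [Finset.mem_inter] at he
    exact ⟨e, Finset.mem_inter.2 ⟨he.1, hx he.2⟩⟩
  · left
    intro x hx
    by_contra! hno
    let M : DInterp K PV :=
      { Dom := K
        ne := ⟨a⟩
        ind := id
        pred := fun p l => (∀ u ∈ l, u = a) ∧ ∃ m ∈ dnf p l.length, m ⊆ x }
    have hM : M.pred G [] := by
      refine hx M ?_ ?_
      · intro cl hcl v hbody
        have hsem : ∀ b ∈ cl.body, ∀ t ∈ b.args, Term.semD M.ind v t = a := fun b hb t ht =>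
          (hbody b hb).1 _ (List.mem_map_of_mem ht)
        have hover : cl.BodyOver a := fun b hb k hk => hsem b hb _ hk
        refine ⟨?_, ?_⟩
        · intro u hu
          obtain ⟨t, ht, rfl⟩ := List.mem_map.1 hu
          cases t with
          | var y =>
            obtain ⟨b, hb, hy⟩ := (hsafe cl hcl).1 y ht
            exact hsem b hb _ hy
          | const k => exact absurd ht ((hsafe cl hcl).2 k)
        · have hhit : ∀ c ∈ bodyCnf s dnf cl, (x ∩ c).Nonempty := by
            rintro c ⟨b, hb, hc⟩
            obtain ⟨-, m, hm, hmx⟩ := hbody b hb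
            rw [List.length_map] at hm
            obtain ⟨e, he⟩ := hc.2 m hm
            rw [Finset.mem_inter] at he
            exact ⟨e, Finset.mem_inter.2 ⟨hmx he.2, he.1⟩⟩
          rcases hD cl x hhit with ⟨m, hm, hmx⟩ | ⟨m, hm, hmx⟩
          · rw [List.length_map]
            exact ⟨m, (hdnf _ _ m).2 (Or.inr ⟨cl, hcl, rfl, rfl, hover, hm⟩), hmx⟩
          · exact absurd hmx (hno m ((hD' m).2 ⟨cl, hcl, hm⟩))
      · intro p k m hm hmx
        refine ⟨fun u hu => List.eq_of_mem_replicate hu, m, ?_, hmx⟩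
        rw [List.length_replicate]
        exact (hdnf _ _ m).2 (Or.inl hm)
    obtain ⟨-, m, hm, -⟩ := hM
    exact hG ⟨m, hm⟩

end Datalog

end QRew

namespace QRew

/-! ### Graphs of polynomials of bounded degree -/

section PolynomialGraphs

open Polynomial

variable {F : Type} [Field F]

/-- Horner evaluation at `i` of the polynomial with coefficients `a 0, …, a (l - 1)`, the
leading coefficient coming first. -/
def hornerVal (a : ℕ → F) (i : F) : ℕ → F
  | 0 => 0
  | l + 1 => hornerVal a i l * i + a l

/-- The polynomial evaluated by `hornerVal`. -/
noncomputable def hornerPoly (a : ℕ → F) : ℕ → F[X]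
  | 0 => 0
  | l + 1 => hornerPoly a l * X + C (a l)

theorem eval_hornerPoly (a : ℕ → F) (i : F) (l : ℕ) :
    (hornerPoly a l).eval i = hornerVal a i l := by
  induction l with
  | zero => simp [hornerPoly, hornerVal]
  | succ l ih => simp [hornerPoly, hornerVal, ih]

theorem degree_hornerPoly_lt (a : ℕ → F) (l : ℕ) : (hornerPoly a l).degree < l := by
  induction l with
  | zero => simp [hornerPoly]
  | succ l ih =>
    rw [degree_lt_iff_coeff_zero] at ih ⊢
    intro m hm
    obtain ⟨m, rfl⟩ : ∃ m', m = m' + 1 := ⟨m - 1, by omega⟩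
    simp [hornerPoly, ih m (by omega)]

theorem hornerPoly_injective {a b : ℕ → F} {l : ℕ} (h : hornerPoly a l = hornerPoly b l) :
    ∀ k < l, a k = b k := by
  induction l with
  | zero => simp
  | succ l ih =>
    have h0 : a l = b l := by
      have := congrArg (fun f => f.coeff 0) h
      simpa [hornerPoly] using this
    have h1 : hornerPoly a l = hornerPoly b l := by
      ext m
      have := congrArg (fun f => f.coeff (m + 1)) h
      simpa [hornerPoly, coeff_C] using this
    intro k hk
    rcases Nat.lt_succ_iff_lt_or_eq.1 hk with hk | rfl
    · exact ih h1 k hk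
    · exact h0

/-- Extension of a finite sequence by zero. -/
def extendZero {d : ℕ} (a : Fin d → F) (l : ℕ) : F := if h : l < d then a ⟨l, h⟩ else 0

variable [Fintype F] [DecidableEq F]

/-- The graph of the polynomial with the given coefficients. -/
def polyGraph {d : ℕ} (a : Fin d → F) : Finset (F × F) :=
  Finset.univ.image fun i => (i, hornerVal (extendZero a) i d)

theorem mem_polyGraph {d : ℕ} (a : Fin d → F) (e : F × F) :
    e ∈ polyGraph a ↔ hornerVal (extendZero a) e.1 d = e.2 := by
  constructor
  · intro h
    obtain ⟨i, -, rfl⟩ := Finset.mem_image.1 h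
    rfl
  · intro h
    exact Finset.mem_image.2 ⟨e.1, Finset.mem_univ _, by rw [h]⟩

theorem card_polyGraph {d : ℕ} (a : Fin d → F) : (polyGraph a).card = Fintype.card F := by
  rw [polyGraph, Finset.card_image_of_injective _ fun i j h => congrArg Prod.fst h,
    Finset.card_univ]

theorem eq_of_subset_polyGraph {d : ℕ} {a b : Fin d → F} {m : Finset (F × F)} (hm : m.card = d)
    (ha : m ⊆ polyGraph a) (hb : m ⊆ polyGraph b) : a = b := by
  have hcard : (m.image Prod.fst).card = d := by
    rw [Finset.card_image_of_injOn, hm]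
    intro e he e' he' h
    have h₁ := (mem_polyGraph a e).1 (ha he)
    have h₂ := (mem_polyGraph a e').1 (ha he')
    refine Prod.ext h ?_
    rw [← h₁, ← h₂, h]
  have hpoly : hornerPoly (extendZero a) d = hornerPoly (extendZero b) d := by
    refine Polynomial.eq_of_degrees_lt_of_eval_finset_eq (m.image Prod.fst) ?_ ?_ ?_
    · rw [hcard]
      exact degree_hornerPoly_lt _ _
    · rw [hcard]
      exact degree_hornerPoly_lt _ _
    · intro i hi
      obtain ⟨e, he, rfl⟩ := Finset.mem_image.1 hi
      rw [eval_hornerPoly, eval_hornerPoly, (mem_polyGraph a e).1 (ha he),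
        (mem_polyGraph b e).1 (hb he)]
  ext l
  have := hornerPoly_injective hpoly l l.2
  simpa [extendZero] using this

theorem pow_le_card_of_cover_polyGraph {d : ℕ} {D : Finset (Finset (F × F))}
    (hD : ∀ m ∈ D, m.card = d) (hcover : ∀ a : Fin d → F, ∃ m ∈ D, m ⊆ polyGraph a) :
    Fintype.card F ^ d ≤ D.card := by
  choose f hf hsub using hcover
  have := Finset.card_le_card_of_injOn (s := (Finset.univ : Finset (Fin d → F))) f
    (fun a _ => hf a) (fun a _ b _ h =>
      eq_of_subset_polyGraph (hD _ (hf a)) (hsub a) (h ▸ hsub b))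
  simpa using this

theorem card_filter_forall_mem_mul {E β : Type} [Fintype E] [DecidableEq E] [Fintype β]
    [DecidableEq β] (S : Finset β) (c : Finset E) :
    (Finset.univ.filter fun g : E → β => ∀ e ∈ c, g e ∈ S).card * Fintype.card β ^ c.card =
      S.card ^ c.card * Fintype.card β ^ Fintype.card E := by
  have h : (Finset.univ.filter fun g : E → β => ∀ e ∈ c, g e ∈ S) =
      Fintype.piFinset fun e => if e ∈ c then S else Finset.univ := by
    ext g
    simp only [Finset.mem_filter, Finset.mem_univ, true_and, Fintype.mem_piFinset]
    refine forall_congr' fun e => ?_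
    split_ifs with he <;> simp [he]
  rw [h, Fintype.card_piFinset]
  have h₂ : ∀ e, (if e ∈ c then S else Finset.univ).card =
      if e ∈ c then S.card else Fintype.card β := fun e => by
    split_ifs <;> simp
  simp only [h₂]
  have h₃ : (Finset.univ.filter fun e => e ∈ c) = c := by ext; simp
  have h₄ := Finset.card_filter_add_card_filter_not (s := Finset.univ) (fun e => e ∈ c)
  rw [h₃, Finset.card_univ] at h₄
  rw [Finset.prod_ite, Finset.prod_const, Finset.prod_const, mul_assoc, ← pow_add, h₃, ← h₄,
    add_comm c.card]

theorem pow_le_card_of_cover_nonmembers {d s M : ℕ} (hM : 0 < M) {C : Finset (Finset (F × F))}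
    (hC : ∀ c ∈ C, c.card = s) {m₀ : Finset (F × F)} (hm₀ : m₀.card ≤ d)
    (hcover : ∀ x : Finset (F × F), m₀ ⊆ x → (∀ a : Fin d → F, ¬ polyGraph a ⊆ x) →
      ∃ c ∈ C, Disjoint c x)
    (hbound : 2 * Fintype.card F ^ d * (M - 1) ^ (Fintype.card F - d) ≤
      M ^ (Fintype.card F - d)) :
    M ^ s ≤ 2 * C.card := by
  obtain ⟨M, rfl⟩ : ∃ M', M = M' + 1 := ⟨M - 1, by omega⟩
  rw [Nat.add_sub_cancel] at hbound
  set k := Fintype.card F - d with hk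
  set N := Fintype.card (F × F) with hN
  have hsub : ∀ a : Fin d → F, ∃ c ⊆ polyGraph a \ m₀, c.card = k := by
    intro a
    refine Finset.exists_subset_card_eq ?_
    have := Finset.le_card_sdiff m₀ (polyGraph a)
    rw [card_polyGraph] at this
    omega
  choose γ hγsub hγcard using hsub
  let bad : Finset (Fin (M + 1)) → Finset (F × F) → Finset (F × F → Fin (M + 1)) :=
    fun S c => Finset.univ.filter fun g => ∀ e ∈ c, g e ∈ S
  have hall : (Finset.univ : Finset (F × F → Fin (M + 1))) ⊆
      (Finset.univ.biUnion fun a => bad {0}ᶜ (γ a)) ∪ C.biUnion fun c => bad {0} c := by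
    intro g _
    by_cases hg : ∃ a : Fin d → F, polyGraph a ⊆ m₀ ∪ Finset.univ.filter fun e => g e ≠ 0
    · obtain ⟨a, ha⟩ := hg
      refine Finset.mem_union_left _ (Finset.mem_biUnion.2 ⟨a, Finset.mem_univ _, ?_⟩)
      refine Finset.mem_filter.2 ⟨Finset.mem_univ _, fun e he => ?_⟩
      obtain ⟨he₁, he₂⟩ := Finset.mem_sdiff.1 (hγsub a he)
      rcases Finset.mem_union.1 (ha he₁) with h | h
      · exact absurd h he₂
      · simpa using h
    · push Not at hg
      obtain ⟨c, hc, hdisj⟩ := hcover _ Finset.subset_union_left hg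
      refine Finset.mem_union_right _ (Finset.mem_biUnion.2 ⟨c, hc, ?_⟩)
      refine Finset.mem_filter.2 ⟨Finset.mem_univ _, fun e he => ?_⟩
      have := Finset.disjoint_left.1 hdisj he
      simp only [Finset.mem_union, Finset.mem_filter, Finset.mem_univ, true_and, not_or,
        not_not] at this
      simpa using this.2
  have hbad₁ : ∀ a, (bad {0}ᶜ (γ a)).card * (M + 1) ^ k = M ^ k * (M + 1) ^ N := by
    intro a
    have := card_filter_forall_mem_mul (E := F × F) ({0}ᶜ : Finset (Fin (M + 1))) (γ a)
    rw [hγcard] at this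
    simpa [bad, Finset.card_compl, hN] using this
  have hbad₂ : ∀ c ∈ C, (bad {0} c).card * (M + 1) ^ s = (M + 1) ^ N := by
    intro c hc
    have := card_filter_forall_mem_mul (E := F × F) ({0} : Finset (Fin (M + 1))) c
    rw [hC c hc] at this
    simpa [bad, hN] using this
  have htotal : (M + 1) ^ N ≤
      ∑ a, (bad {0}ᶜ (γ a)).card + ∑ c ∈ C, (bad {0} c).card := by
    calc (M + 1) ^ N = (Finset.univ : Finset (F × F → Fin (M + 1))).card := by simp [hN]
      _ ≤ _ := Finset.card_le_card hall
      _ ≤ _ := Finset.card_union_le _ _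
      _ ≤ _ := Nat.add_le_add Finset.card_biUnion_le Finset.card_biUnion_le
  have h₁ : (∑ a, (bad {0}ᶜ (γ a)).card) * (M + 1) ^ k =
      Fintype.card F ^ d * (M ^ k * (M + 1) ^ N) := by
    rw [Finset.sum_mul, Finset.sum_congr rfl fun a _ => hbad₁ a]
    simp
  have h₂ : (∑ c ∈ C, (bad {0} c).card) * (M + 1) ^ s = C.card * (M + 1) ^ N := by
    rw [Finset.sum_mul, Finset.sum_congr rfl hbad₂]
    simp
  generalize (∑ a, (bad {0}ᶜ (γ a)).card) = A at *
  generalize (∑ c ∈ C, (bad {0} c).card) = B at *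
  have hpos : 0 < (M + 1) ^ N * (M + 1) ^ k := by positivity
  refine Nat.le_of_mul_le_mul_left ?_ hpos
  have h₃ : 2 * (M + 1) ^ N * ((M + 1) ^ k * (M + 1) ^ s) ≤
      2 * (A * (M + 1) ^ k) * (M + 1) ^ s + 2 * (B * (M + 1) ^ s) * (M + 1) ^ k := by
    calc 2 * (M + 1) ^ N * ((M + 1) ^ k * (M + 1) ^ s)
        ≤ 2 * (A + B) * ((M + 1) ^ k * (M + 1) ^ s) := by gcongr
      _ = _ := by ring
  rw [h₁, h₂] at h₃
  have h₄ : 2 * Fintype.card F ^ d * M ^ k * ((M + 1) ^ N * (M + 1) ^ s) ≤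
      (M + 1) ^ k * ((M + 1) ^ N * (M + 1) ^ s) := Nat.mul_le_mul_right _ hbound
  linarith

end PolynomialGraphs

/-! ### Numerical estimates -/

theorem pow_add_mul_pow_le (a n : ℕ) : a ^ (n + 1) + (n + 1) * a ^ n ≤ (a + 1) ^ (n + 1) := by
  induction n with
  | zero => simp
  | succ n ih =>
    calc a ^ (n + 1 + 1) + (n + 1 + 1) * a ^ (n + 1)
        ≤ (a ^ (n + 1) + (n + 1) * a ^ n) * (a + 1) := by
          ring_nf
          nlinarith [Nat.zero_le (a ^ n), Nat.zero_le (n * a ^ n)]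
      _ ≤ (a + 1) ^ (n + 1) * (a + 1) := Nat.mul_le_mul_right _ ih
      _ = _ := by ring

theorem two_pow_mul_pow_le (a j k : ℕ) (h : (a + 1) * j ≤ k) : 2 ^ j * a ^ k ≤ (a + 1) ^ k := by
  obtain ⟨i, rfl⟩ := Nat.exists_eq_add_of_le h
  have h₁ : 2 * a ^ (a + 1) ≤ (a + 1) ^ (a + 1) := by
    have := pow_add_mul_pow_le a a
    calc 2 * a ^ (a + 1) ≤ a ^ (a + 1) + (a + 1) * a ^ a := by
          rw [pow_succ]
          nlinarith [Nat.zero_le (a ^ a)]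
      _ ≤ _ := this
  calc 2 ^ j * a ^ ((a + 1) * j + i) = (2 * a ^ (a + 1)) ^ j * a ^ i := by
        rw [pow_add, pow_mul, mul_pow, mul_assoc]
    _ ≤ ((a + 1) ^ (a + 1)) ^ j * (a + 1) ^ i := by gcongr; omega
    _ = (a + 1) ^ ((a + 1) * j + i) := by rw [← pow_mul, pow_add]

theorem eight_mul_pow_five_le (w : ℕ) (hw : 30 ≤ w) : 8 * w ^ 5 ≤ 2 ^ w := by
  induction w, hw using Nat.le_induction with
  | base => norm_num
  | succ w hw ih =>
    have : (w + 1) ^ 5 ≤ 2 * w ^ 5 := by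
      have h4 : w ^ 4 * 30 ≤ w ^ 5 := by rw [pow_succ w 4]; exact Nat.mul_le_mul_left _ hw
      have h3 : w ^ 3 * 30 ≤ w ^ 4 := by rw [pow_succ w 3]; exact Nat.mul_le_mul_left _ hw
      have h2 : w ^ 2 * 30 ≤ w ^ 3 := by rw [pow_succ w 2]; exact Nat.mul_le_mul_left _ hw
      have h1 : w * 30 ≤ w ^ 2 := by rw [pow_two]; exact Nat.mul_le_mul_left _ hw
      ring_nf
      omega
    rw [pow_succ 2]
    omega

theorem deletion_bound {w p : ℕ} (hw : 30 ≤ w) (hp₁ : 4 * w ^ 5 ≤ p) (hp₂ : p ≤ 8 * w ^ 5) :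
    2 * p ^ w ^ 2 * (2 * w ^ 2 - 1) ^ (p - w ^ 2) ≤ (2 * w ^ 2) ^ (p - w ^ 2) := by
  have hw2 : 0 < w ^ 2 := by positivity
  have hM : 2 * w ^ 2 = (2 * w ^ 2 - 1) + 1 := by omega
  have hj : (2 * w ^ 2 - 1 + 1) * (w ^ 3 + 1) ≤ p - w ^ 2 := by
    rw [← hM]
    have h1 : 2 * w ^ 2 * (w ^ 3 + 1) = 2 * w ^ 5 + 2 * w ^ 2 := by ring
    have h2 : 2 * w ^ 2 ≤ w ^ 5 := by
      calc 2 * w ^ 2 ≤ w ^ 3 * w ^ 2 := by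
            gcongr
            calc 2 ≤ w := by omega
              _ ≤ w ^ 3 := Nat.le_self_pow (by norm_num) w
        _ = w ^ 5 := by ring
    omega
  have hpw : 2 * p ^ w ^ 2 ≤ 2 ^ (w ^ 3 + 1) := by
    calc 2 * p ^ w ^ 2 ≤ 2 * (2 ^ w) ^ w ^ 2 := by
          gcongr
          exact hp₂.trans (eight_mul_pow_five_le w hw)
      _ = 2 ^ (w ^ 3 + 1) := by rw [← pow_mul]; ring
  calc 2 * p ^ w ^ 2 * (2 * w ^ 2 - 1) ^ (p - w ^ 2)
      ≤ 2 ^ (w ^ 3 + 1) * (2 * w ^ 2 - 1) ^ (p - w ^ 2) := Nat.mul_le_mul_right _ hpw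
    _ ≤ (2 * w ^ 2 - 1 + 1) ^ (p - w ^ 2) := two_pow_mul_pow_le _ _ _ hj
    _ = _ := by rw [← hM]

end QRew

namespace QRew

/-! ### Reducts of interpretations -/

section Comap

variable {K CN RN K' CN' RN' : Type} (fK : K → K') (fC : CN → CN') (fR : RN → RN')

/-- The reduct of an interpretation along a map of signatures. -/
def Interp.comap (I : Interp K' CN' RN') : Interp K CN RN where
  Dom := I.Dom
  ne := I.ne
  ind := fun k => I.ind (fK k)
  conc := fun A => I.conc (fC A)
  role := fun P => I.role (fR P)

variable (I : Interp K' CN' RN')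

theorem Role.sem_map (R : Role RN) : (R.map fR).sem I = R.sem (I.comap fK fC fR) := by
  cases R <;> rfl

theorem BCon.sem_map (B : BCon CN RN) : (B.map fC fR).sem I = B.sem (I.comap fK fC fR) := by
  cases B with
  | bot => rfl
  | atom A => rfl
  | exr R =>
    funext u
    simp only [BCon.map, BCon.sem, Role.sem_map fK fC fR]
    rfl

theorem Con.sem_map (c : Con CN RN) : (c.map fC fR).sem I = c.sem (I.comap fK fC fR) := by
  cases c with
  | bc B => exact BCon.sem_map fK fC fR I B
  | exrb R B =>
    funext u
    simp only [Con.map, Con.sem, Role.sem_map fK fC fR, BCon.sem_map fK fC fR]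
    rfl

theorem Ax.sem_map (ax : Ax CN RN) : (ax.map fC fR).sem I ↔ ax.sem (I.comap fK fC fR) := by
  cases ax with
  | sub B c => simp only [Ax.map, Ax.sem, BCon.sem_map fK, Con.sem_map fK]; rfl
  | rsub R R' => simp only [Ax.map, Ax.sem, Role.sem_map fK fC]; rfl
  | disj B B' => simp only [Ax.map, Ax.sem, BCon.sem_map fK]; rfl
  | rdisj R R' => simp only [Ax.map, Ax.sem, Role.sem_map fK fC]; rfl

theorem Term.sem_map (v : ℕ → I.Dom) (t : Term K) :
    (t.map fK).sem I v = t.sem (I.comap fK fC fR) v := by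
  cases t <;> rfl

theorem CQAtom.sem_map (v : ℕ → I.Dom) (a : CQAtom K CN RN) :
    (a.map fK fC fR).sem I v ↔ a.sem (I.comap fK fC fR) v := by
  cases a with
  | conc A t => simp only [CQAtom.map, CQAtom.sem, Term.sem_map fK fC fR]; rfl
  | role P t t' => simp only [CQAtom.map, CQAtom.sem, Term.sem_map fK fC fR]; rfl

theorem CQ.sem_map (q : CQ K CN RN) :
    CQ.sem I (CQ.map fK fC fR q) ↔ CQ.sem (I.comap fK fC fR) q := by
  simp only [CQ.sem, CQ.map, List.forall_mem_map, CQAtom.sem_map]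
  rfl

end Comap

/-! ### Encoding constraint satisfaction along a tree of partial assignments

A clause `j` is a disjunction of three constraints; its `t`-th constraint restricts the letter at
position `lv j t` by the predicate `lit j t`. -/

/-- The concept names of the encoding: nodes of a given depth, nodes with a given last letter,
and nodes from which the chain of a given clause descends. -/
inductive PathConcept (S J : Type) : Type
  | node : ℕ → PathConcept S J
  | letter : ℕ → S → PathConcept S J
  | clause : ℕ → J → PathConcept S J

section Encoding

open PathConcept

variable {S J : Type}

section TBoxAndQuery

variable [Fintype J]

/-- The axioms generating the tree of all words. -/
noncomputable def branchAxioms [Fintype S] (L : ℕ) : List (Ax (PathConcept S J) ℕ) :=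
  (List.range L).flatMap fun l => (Finset.univ : Finset S).toList.flatMap fun σ =>
    [.sub (.atom (node l)) (.exrb (.pos l) (.atom (letter (l + 1) σ))),
      .sub (.atom (letter (l + 1) σ)) (.bc (.atom (node (l + 1))))]

open Classical in
/-- The axioms marking the letters that satisfy a clause. -/
noncomputable def literalAxioms [Fintype S] (lv : J → Fin 3 → ℕ) (lit : J → Fin 3 → S → Prop) :
    List (Ax (PathConcept S J) ℕ) :=
  (Finset.univ : Finset J).toList.flatMap fun j => (Finset.univ : Finset (Fin 3)).toList.flatMap
    fun t => ((Finset.univ : Finset S).toList.filter fun σ => lit j t σ).flatMap fun σ =>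
      [.sub (.atom (letter (lv j t + 1) σ)) (.bc (.atom (clause (lv j t + 1) j)))]

/-- The axioms attaching a chain to every node where a clause is satisfied. -/
noncomputable def chainAxioms (L : ℕ) : List (Ax (PathConcept S J) ℕ) :=
  (Finset.univ : Finset J).toList.flatMap fun j => (List.range L).flatMap fun l =>
    [.sub (.atom (clause (l + 1) j)) (.exrb (.inv l) (.atom (clause l j)))]

/-- The TBox of the encoding. -/
noncomputable def pathTBox [Fintype S] (L : ℕ) (lv : J → Fin 3 → ℕ) (lit : J → Fin 3 → S → Prop) :
    List (Ax (PathConcept S J) ℕ) :=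
  branchAxioms L ++ literalAxioms lv lit ++ chainAxioms L

/-- The variable at depth `l` of the main path (`none`) or of the path of a clause; all paths
share the variable at depth `L`. -/
noncomputable def pathVar (L : ℕ) (o : Option J) (l : ℕ) : ℕ :=
  if l = L then Nat.pair 0 L else Nat.pair (Fintype.equivFin (Option J) o) l

/-- A path of length `L` whose variable of depth `0` satisfies `A`. -/
noncomputable def chainCQ (L : ℕ) (A : PathConcept S J) (o : Option J) :
    CQ Unit (PathConcept S J) ℕ :=
  .conc A (.var (pathVar L o 0)) ::
    (List.range L).flatMap fun l => [.role l (.var (pathVar L o l)) (.var (pathVar L o (l + 1)))]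

/-- The query of the encoding. -/
noncomputable def pathCQ (S J : Type) [Fintype J] (L : ℕ) : CQ Unit (PathConcept S J) ℕ :=
  chainCQ L (node 0) none ++
    (Finset.univ : Finset J).toList.flatMap fun j => chainCQ L (clause 0 j) (some j)

theorem sum_map_flatMap_le {α β : Type} (f : β → ℕ) (g : α → List β) (N : ℕ) (l : List α)
    (h : ∀ a ∈ l, ((g a).map f).sum ≤ N) : ((l.flatMap g).map f).sum ≤ l.length * N := by
  induction l with
  | nil => simp
  | cons a l ih =>
    have h₁ := h a (by simp)
    have h₂ := ih fun b hb => h b (by simp [hb])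
    simp only [List.flatMap_cons, List.map_append, List.sum_append, List.length_cons]
    linarith

theorem tbSize_pathTBox_le [Fintype S] (L : ℕ) (lv : J → Fin 3 → ℕ) (lit : J → Fin 3 → S → Prop) :
    tbSize (pathTBox L lv lit) ≤ L * (Fintype.card S * 8) +
      Fintype.card J * (3 * (Fintype.card S * 3)) + Fintype.card J * (L * 5) := by
  rw [tbSize, pathTBox, List.map_append, List.map_append, List.sum_append, List.sum_append]
  refine Nat.add_le_add (Nat.add_le_add ?_ ?_) ?_
  · refine (sum_map_flatMap_le _ _ (Fintype.card S * 8) _ fun l _ => ?_).trans (by simp)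
    refine (sum_map_flatMap_le _ _ 8 _ fun σ _ => ?_).trans (by simp)
    simp [Ax.size, Con.size, BCon.size]
  · refine (sum_map_flatMap_le _ _ (3 * (Fintype.card S * 3)) _ fun j _ => ?_).trans (by simp)
    refine (sum_map_flatMap_le _ _ (Fintype.card S * 3) _ fun t _ => ?_).trans (by simp)
    refine (sum_map_flatMap_le _ _ 3 _ fun σ _ => ?_).trans ?_
    · simp [Ax.size, Con.size, BCon.size]
    · refine Nat.mul_le_mul_right _ ((List.length_filter_le _ _).trans (by simp))
  · refine (sum_map_flatMap_le _ _ (L * 5) _ fun j _ => ?_).trans (by simp)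
    refine (sum_map_flatMap_le _ _ 5 _ fun l _ => ?_).trans (by simp)
    simp [Ax.size, Con.size, BCon.size]

theorem cqSize_chainCQ_le (L : ℕ) (A : PathConcept S J) (o : Option J) :
    cqSize (chainCQ L A o) ≤ 2 + L * 3 := by
  rw [cqSize, chainCQ, List.map_cons, List.sum_cons]
  refine Nat.add_le_add le_rfl ?_
  refine (sum_map_flatMap_le _ _ 3 _ fun l _ => ?_).trans (by simp)
  simp [CQAtom.size]

theorem cqSize_pathCQ_le (L : ℕ) :
    cqSize (pathCQ S J L) ≤ (2 + L * 3) + Fintype.card J * (2 + L * 3) := by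
  rw [cqSize, pathCQ, List.map_append, List.sum_append]
  refine Nat.add_le_add (cqSize_chainCQ_le _ _ _) ?_
  exact (sum_map_flatMap_le _ _ (2 + L * 3) _ fun j _ => cqSize_chainCQ_le _ _ _).trans (by simp)

theorem forall_mem_pathTBox [Fintype S] {L : ℕ} {lv : J → Fin 3 → ℕ} {lit : J → Fin 3 → S → Prop}
    (I : Interp Unit (PathConcept S J) ℕ) :
    (∀ ax ∈ pathTBox L lv lit, ax.sem I) ↔
      (∀ l < L, ∀ σ u, I.conc (node l) u → ∃ v, I.role l u v ∧ I.conc (letter (l + 1) σ) v) ∧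
      (∀ l < L, ∀ σ u, I.conc (letter (l + 1) σ) u → I.conc (node (l + 1)) u) ∧
      (∀ j t σ u, lit j t σ → I.conc (letter (lv j t + 1) σ) u →
        I.conc (clause (lv j t + 1) j) u) ∧
      ∀ j, ∀ l < L, ∀ u, I.conc (clause (l + 1) j) u →
        ∃ v, I.role l v u ∧ I.conc (clause l j) v := by
  simp only [pathTBox, branchAxioms, literalAxioms, chainAxioms, List.mem_append,
    List.mem_flatMap, Finset.mem_toList, Finset.mem_univ, true_and, List.mem_range, List.mem_cons,
    List.not_mem_nil, or_false, List.mem_filter, decide_eq_true_eq]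
  constructor
  · intro h
    exact ⟨fun l hl σ => h _ (.inl (.inl ⟨l, hl, σ, .inl rfl⟩)),
      fun l hl σ => h _ (.inl (.inl ⟨l, hl, σ, .inr rfl⟩)),
      fun j t σ u hlit => h _ (.inl (.inr ⟨j, t, σ, hlit, rfl⟩)) u,
      fun j l hl => h _ (.inr ⟨j, l, hl, rfl⟩)⟩
  · rintro ⟨h₁, h₂, h₃, h₄⟩ ax ((⟨l, hl, σ, rfl | rfl⟩ | ⟨j, t, σ, hlit, rfl⟩) | ⟨j, l, hl, rfl⟩)
    · exact h₁ l hl σ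
    · exact h₂ l hl σ
    · exact fun u => h₃ j t σ u hlit
    · exact h₄ j l hl

theorem forall_mem_chainCQ {L : ℕ} {A : PathConcept S J} {o : Option J}
    {I : Interp Unit (PathConcept S J) ℕ} (v : ℕ → I.Dom) :
    (∀ a ∈ chainCQ L A o, a.sem I v) ↔ I.conc A (v (pathVar L o 0)) ∧
      ∀ l < L, I.role l (v (pathVar L o l)) (v (pathVar L o (l + 1))) := by
  simp only [chainCQ, List.forall_mem_cons, List.mem_flatMap, List.mem_range, List.mem_singleton]
  refine and_congr Iff.rfl ⟨fun h l hl => h _ ⟨l, hl, rfl⟩, ?_⟩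
  rintro h a ⟨l, hl, rfl⟩
  exact h l hl

theorem sem_pathCQ_iff {L : ℕ} (I : Interp Unit (PathConcept S J) ℕ) :
    CQ.sem I (pathCQ S J L) ↔ ∃ φ : Option J → ℕ → I.Dom, (∀ o, φ o L = φ none L) ∧
      I.conc (node 0) (φ none 0) ∧ (∀ j, I.conc (clause 0 j) (φ (some j) 0)) ∧
      ∀ o, ∀ l < L, I.role l (φ o l) (φ o (l + 1)) := by
  have hsem : CQ.sem I (pathCQ S J L) ↔ ∃ v : ℕ → I.Dom,
      I.conc (node 0) (v (pathVar L (none : Option J) 0)) ∧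
      (∀ j, I.conc (clause 0 j) (v (pathVar L (some j) 0))) ∧
      ∀ o : Option J, ∀ l < L, I.role l (v (pathVar L o l)) (v (pathVar L o (l + 1))) := by
    refine exists_congr fun v => ?_
    simp only [pathCQ, List.forall_mem_append, forall_mem_chainCQ]
    have : (∀ a ∈ (Finset.univ : Finset J).toList.flatMap
          (fun j => chainCQ L (clause 0 j) (some j)), a.sem I v) ↔
        ∀ j : J, ∀ a ∈ chainCQ L (clause (S := S) 0 j) (some j), a.sem I v := by
      simp only [List.mem_flatMap, Finset.mem_toList, Finset.mem_univ, true_and]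
      exact ⟨fun h j a ha => h a ⟨j, ha⟩, fun h a ⟨j, ha⟩ => h j a ha⟩
    rw [this]
    simp only [forall_mem_chainCQ, Option.forall, forall_and]
    tauto
  rw [hsem]
  constructor
  · rintro ⟨v, h⟩
    exact ⟨fun o l => v (pathVar L o l), fun o => by simp [pathVar], h⟩
  · rintro ⟨φ, hφ, h⟩
    have hinv := Function.leftInverse_invFun (Fin.val_injective.comp
      (Fintype.equivFin (Option J)).injective)
    refine ⟨fun n => φ (Function.invFun (fun o => (Fintype.equivFin (Option J) o : ℕ))
      n.unpair.1) n.unpair.2, ?_⟩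
    have key : ∀ o l, φ (Function.invFun (fun o => (Fintype.equivFin (Option J) o : ℕ))
        (pathVar L o l).unpair.1) (pathVar L o l).unpair.2 = φ o l := by
      intro o l
      unfold pathVar
      split_ifs with hl
      · rw [Nat.unpair_pair, hl, hφ, hφ o]
      · rw [Nat.unpair_pair]
        exact congrArg (fun o' => φ o' l) (hinv o)
    simp only [key]
    exact h

theorem sem_pathCQ_of_sat [Fintype S] {L : ℕ} {lv : J → Fin 3 → ℕ} {lit : J → Fin 3 → S → Prop}
    (hlv : ∀ j t, lv j t < L) {I : Interp Unit (PathConcept S J) ℕ}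
    (hT : ∀ ax ∈ pathTBox L lv lit, ax.sem I) {X : Finset J} {u : I.Dom}
    (hroot : I.conc (node 0) u) (hX : ∀ j ∈ X, I.conc (clause 0 j) u) {y : ℕ → S}
    (hy : ∀ j, j ∈ X ∨ ∃ t, lit j t (y (lv j t))) : CQ.sem I (pathCQ S J L) := by
  obtain ⟨hbranch, hnode, hlit, hchain⟩ := (forall_mem_pathTBox I).1 hT
  have hmain : ∀ k ≤ L, ∃ w : ℕ → I.Dom, w 0 = u ∧ I.conc (node k) (w k) ∧
      ∀ l < k, I.role l (w l) (w (l + 1)) ∧ I.conc (letter (l + 1) (y l)) (w (l + 1)) := by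
    intro k
    induction k with
    | zero => exact fun _ => ⟨fun _ => u, rfl, hroot, by simp⟩
    | succ k ih =>
      intro hk
      obtain ⟨w, hw₀, hwk, hw⟩ := ih (by omega)
      obtain ⟨v, hrole, hletter⟩ := hbranch k hk (y k) _ hwk
      refine ⟨Function.update w (k + 1) v, by simp [hw₀],
        by simpa using hnode k hk _ _ hletter, fun l hl => ?_⟩
      rcases Nat.lt_succ_iff_lt_or_eq.1 hl with hl | rfl
      · rw [Function.update_of_ne (by omega), Function.update_of_ne (by omega)]
        exact hw l hl
      · simpa using ⟨hrole, hletter⟩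
  obtain ⟨w, hw₀, -, hw⟩ := hmain L le_rfl
  have hside : ∀ j, ∃ z : ℕ → I.Dom, z L = w L ∧ I.conc (clause 0 j) (z 0) ∧
      ∀ l < L, I.role l (z l) (z (l + 1)) := by
    intro j
    rcases hy j with hj | ⟨t, ht⟩
    · exact ⟨w, rfl, hw₀ ▸ hX j hj, fun l hl => (hw l hl).1⟩
    · have hdesc : ∀ k ≤ L, ∀ z : ℕ → I.Dom, I.conc (clause k j) (z k) →
          (∀ l, k ≤ l → l < L → I.role l (z l) (z (l + 1))) →
          ∃ z' : ℕ → I.Dom, (∀ l ≥ k, z' l = z l) ∧ I.conc (clause 0 j) (z' 0) ∧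
            ∀ l < L, I.role l (z' l) (z' (l + 1)) := by
        intro k
        induction k with
        | zero => exact fun _ z h₁ h₂ => ⟨z, fun _ _ => rfl, h₁, fun l hl => h₂ l (by simp) hl⟩
        | succ k ih =>
          intro hk z h₁ h₂
          obtain ⟨v, hrole, hv⟩ := hchain j k hk _ h₁
          obtain ⟨z', hz'₁, hz'₂⟩ := ih (by omega) (Function.update z k v) (by simpa using hv) (by
            intro l hkl hl
            rw [Function.update_of_ne (show l + 1 ≠ k by omega)]
            rcases hkl.eq_or_lt with rfl | hkl
            · simpa using hrole
            · rw [Function.update_of_ne (by omega)]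
              exact h₂ l hkl hl)
          refine ⟨z', fun l hl => ?_, hz'₂⟩
          rw [hz'₁ l (by omega), Function.update_of_ne (by omega)]
      have hlt := hlv j t
      obtain ⟨z, hz₁, hz₂⟩ := hdesc (lv j t + 1) hlt w (hlit j t _ _ ht (hw _ hlt).2)
        fun l _ hl => (hw l hl).1
      exact ⟨z, hz₁ L hlt, hz₂⟩
  choose z hz₁ hz₂ hz₃ using hside
  refine (sem_pathCQ_iff I).2 ⟨fun o => o.elim w z, ?_, ?_, hz₂, ?_⟩
  · rintro (_ | j)
    · rfl
    · exact hz₁ j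
  · change I.conc (node 0) (w 0)
    rwa [hw₀]
  · rintro (_ | j) l hl
    · exact (hw l hl).1
    · exact hz₃ j l hl

end TBoxAndQuery

/-! #### A universal model

The nodes are the words over `S` (last letter first) and the elements `(j, l)` of a chain for
every clause `j`. -/

/-- The concepts of the universal model. -/
def treeConc (lv : J → Fin 3 → ℕ) (lit : J → Fin 3 → S → Prop) (X : Finset J) :
    PathConcept S J → List S ⊕ J × ℕ → Prop
  | node l, .inl w => w.length = l
  | letter l σ, .inl (τ :: w) => τ = σ ∧ l = w.length + 1
  | clause l j, .inl [] => l = 0 ∧ j ∈ X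
  | clause l j, .inl (τ :: w) => l = w.length + 1 ∧ ∃ t, lv j t = w.length ∧ lit j t τ
  | clause l j, .inr e => e = (j, l)
  | _, _ => False

/-- The roles of the universal model. -/
def treeRole (lv : J → Fin 3 → ℕ) (lit : J → Fin 3 → S → Prop) (X : Finset J) (l : ℕ) :
    List S ⊕ J × ℕ → List S ⊕ J × ℕ → Prop
  | .inl u, .inl v => u.length = l ∧ ∃ σ, v = σ :: u
  | .inr e, v => e.2 = l ∧ treeConc lv lit X (clause (l + 1) e.1) v
  | .inl _, .inr _ => False

/-- The universal model. -/
def treeInterp (lv : J → Fin 3 → ℕ) (lit : J → Fin 3 → S → Prop) (X : Finset J) :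
    Interp Unit (PathConcept S J) ℕ where
  Dom := List S ⊕ J × ℕ
  ne := ⟨.inl []⟩
  ind := fun _ => .inl []
  conc := treeConc lv lit X
  role := treeRole lv lit X

theorem treeInterp_model [Fintype S] [Fintype J] (L : ℕ) (lv : J → Fin 3 → ℕ)
    (lit : J → Fin 3 → S → Prop) (X : Finset J) :
    ∀ ax ∈ pathTBox L lv lit, ax.sem (treeInterp lv lit X) := by
  rw [forall_mem_pathTBox]
  refine ⟨?_, ?_, ?_, ?_⟩
  · rintro l - σ (w | e) h
    · exact ⟨.inl (σ :: w), ⟨h, σ, rfl⟩, rfl, congrArg (· + 1) (Eq.symm h)⟩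
    · exact h.elim
  · rintro l - σ ((_ | ⟨τ, w⟩) | e) h
    · exact h.elim
    · exact h.2.symm
    · exact h.elim
  · rintro j t σ ((_ | ⟨τ, w⟩) | e) hlit h
    · exact h.elim
    · obtain ⟨rfl, h⟩ := h
      exact ⟨h, t, by omega, hlit⟩
    · exact h.elim
  · intro j l _ u h
    exact ⟨.inr (j, l), ⟨rfl, h⟩, rfl⟩

/-- The word of the first `l` letters of `y`, last letter first. -/
def prefixWord (y : ℕ → S) : ℕ → List S
  | 0 => []
  | l + 1 => y l :: prefixWord y l

theorem length_prefixWord (y : ℕ → S) (l : ℕ) : (prefixWord y l).length = l := by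
  induction l with
  | zero => rfl
  | succ l ih => simp [prefixWord, ih]

theorem exists_sat_of_sem_pathCQ [Nonempty S] [Fintype J] {L : ℕ} {lv : J → Fin 3 → ℕ}
    {lit : J → Fin 3 → S → Prop} {X : Finset J}
    (h : CQ.sem (treeInterp lv lit X) (pathCQ S J L)) :
    ∃ y : ℕ → S, ∀ j, j ∈ X ∨ ∃ t, lit j t (y (lv j t)) := by
  obtain ⟨φ, hφ, hroot, hclause, hrole⟩ := (sem_pathCQ_iff _).1 h
  have hmain : ∃ y : ℕ → S, ∀ l ≤ L, φ none l = .inl (prefixWord y l) := by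
    have hstep : ∀ l, ∃ σ : S, ∀ w w', φ none l = .inl w → φ none (l + 1) = .inl w' →
        (∃ τ, w' = τ :: w) → w' = σ :: w := by
      intro l
      by_cases hl : ∃ w τ, φ none l = .inl w ∧ φ none (l + 1) = .inl (τ :: w)
      · obtain ⟨w, τ, h₁, h₂⟩ := hl
        refine ⟨τ, fun v v' hv hv' _ => ?_⟩
        rw [h₁] at hv
        rw [h₂] at hv'
        rw [← Sum.inl_injective hv, ← Sum.inl_injective hv']
      · refine ⟨Classical.arbitrary S, ?_⟩
        rintro w _ hw hw' ⟨τ, rfl⟩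
        exact absurd ⟨w, τ, hw, hw'⟩ hl
    choose y hy using hstep
    refine ⟨y, fun l => ?_⟩
    induction l with
    | zero =>
      intro _
      change treeConc lv lit X (node 0) (φ none 0) at hroot
      rcases hu : φ none 0 with w | e
      · rw [hu] at hroot
        exact congrArg Sum.inl (List.eq_nil_of_length_eq_zero hroot)
      · rw [hu] at hroot
        exact hroot.elim
    | succ l ih =>
      intro hl
      have hu := ih (by omega)
      have hr : treeRole lv lit X l (φ none l) (φ none (l + 1)) := hrole none l hl
      rcases hv : φ none (l + 1) with w | e
      · rw [hu, hv] at hr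
        exact congrArg Sum.inl (hy l _ _ hu hv hr.2)
      · rw [hu, hv] at hr
        exact hr.elim
  obtain ⟨y, hy⟩ := hmain
  refine ⟨y, fun j => ?_⟩
  have hdesc : ∀ k ≤ L, φ (some j) (L - k) = .inl (prefixWord y (L - k)) ∨
      ∃ j', φ (some j) (L - k) = .inr (j', L - k) ∧ ∃ t, lit j' t (y (lv j' t)) := by
    intro k
    induction k with
    | zero => exact fun _ => Or.inl ((hφ _).trans (hy L le_rfl))
    | succ k ih =>
      intro hk
      have hstep := ih (by omega)
      obtain ⟨l, hl⟩ : ∃ l, L - (k + 1) = l := ⟨_, rfl⟩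
      have hl' : L - k = l + 1 := by omega
      rw [hl'] at hstep
      rw [hl]
      have hr : treeRole lv lit X l (φ (some j) l) (φ (some j) (l + 1)) :=
        hrole (some j) l (by omega)
      rcases hu : φ (some j) l with w | ⟨j', m⟩
      · left
        rw [hu] at hr
        rcases hstep with hv | ⟨j', hv, -⟩
        · rw [hv] at hr
          obtain ⟨-, σ, hσ⟩ := hr
          rw [prefixWord, List.cons.injEq] at hσ
          rw [hσ.2]
        · rw [hv] at hr
          exact hr.elim
      · right
        rw [hu] at hr
        obtain ⟨hm, hr⟩ := hr
        simp only at hm hr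
        refine ⟨j', by rw [hm], ?_⟩
        rcases hstep with hv | ⟨j'', hv, hsat⟩
        · rw [hv] at hr
          obtain ⟨-, t, ht, hlit⟩ := hr
          rw [length_prefixWord] at ht
          exact ⟨t, ht ▸ hlit⟩
        · rw [hv] at hr
          have hj : (j'', l + 1) = (j', l + 1) := hr
          rw [Prod.mk.injEq] at hj
          exact hj.1 ▸ hsat
  have h₀ : treeConc lv lit X (clause 0 j) (φ (some j) 0) := hclause j
  have hend := hdesc L le_rfl
  rw [Nat.sub_self] at hend
  rcases hend with hv | ⟨j', hv, hsat⟩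
  · rw [hv] at h₀
    exact Or.inl h₀.2
  · rw [hv] at h₀
    have hj : (j', 0) = (j, 0) := h₀
    rw [Prod.mk.injEq] at hj
    exact Or.inr (hj.1 ▸ hsat)

/-- The data selecting the clauses in `X` as satisfied. -/
noncomputable def pathABox (EK EC ER : Type) (X : Finset J) :
    ABox (Unit ⊕ EK) (PathConcept S J ⊕ EC) (ℕ ⊕ ER) :=
  .conc (.inl (node 0)) (.inl ()) ::
    X.toList.map fun j => .conc (.inl (clause 0 j)) (.inl ())

theorem entails_pathABox_iff [Nonempty S] [Fintype S] [Fintype J] (EK EC ER : Type) {L : ℕ}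
    {lv : J → Fin 3 → ℕ} {lit : J → Fin 3 → S → Prop} (hlv : ∀ j t, lv j t < L) (X : Finset J) :
    Entails ((pathTBox L lv lit).map (Ax.map Sum.inl Sum.inl)) (pathABox EK EC ER X)
        (CQ.map Sum.inl Sum.inl Sum.inl (pathCQ S J L)) ↔
      ∃ y : ℕ → S, ∀ j, j ∈ X ∨ ∃ t, lit j t (y (lv j t)) := by
  constructor
  · intro h
    let I : Interp (Unit ⊕ EK) (PathConcept S J ⊕ EC) (ℕ ⊕ ER) :=
      { Dom := List S ⊕ J × ℕ
        ne := ⟨.inl []⟩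
        ind := fun _ => .inl []
        conc := Sum.elim (treeConc lv lit X) fun _ _ => False
        role := Sum.elim (treeRole lv lit X) fun _ _ _ => False }
    have hI : I.comap Sum.inl Sum.inl Sum.inl = treeInterp lv lit X := rfl
    have hq := h I ?_ ?_
    · rw [CQ.sem_map, hI] at hq
      exact exists_sat_of_sem_pathCQ hq
    · simp only [List.forall_mem_map]
      intro ax hax
      rw [Ax.sem_map Sum.inl, hI]
      exact treeInterp_model L lv lit X ax hax
    · simp only [pathABox, List.forall_mem_cons, List.forall_mem_map, Finset.mem_toList]
      exact ⟨rfl, fun j hj => ⟨rfl, hj⟩⟩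
  · rintro ⟨y, hy⟩ I hT hA
    simp only [pathABox, List.forall_mem_cons, List.forall_mem_map, Finset.mem_toList] at hA
    rw [CQ.sem_map]
    refine sem_pathCQ_of_sat (u := I.ind (.inl ())) hlv (fun ax hax => ?_) hA.1 hA.2 hy
    exact (Ax.sem_map Sum.inl Sum.inl Sum.inl I ax).1 (hT _ (List.mem_map_of_mem hax))

end Encoding

end QRew

namespace QRew

/-! ### Polynomial evaluation as a constraint satisfaction problem -/

section PolyClauses

variable (F : Type) (d : ℕ)

/-- The letters of a word: the coefficients of a polynomial and, for every point, the
intermediate values of its evaluation by Horner's rule. -/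
abbrev PolyPos : Type := Fin d ⊕ F × Fin (d + 1)

/-- The clauses: the steps of the evaluation, its initial values, and the exclusion of a point
from the graph. -/
abbrev PolyClause : Type := (F × Fin d × F × F) ⊕ (F ⊕ F × F)

variable {F d}

section Index

variable [Fintype F]

/-- The index of a letter. -/
noncomputable def polyIndex (w : PolyPos F d) : ℕ := Fintype.equivFin (PolyPos F d) w

theorem polyIndex_lt (w : PolyPos F d) : polyIndex w < Fintype.card (PolyPos F d) := Fin.is_lt _

theorem polyIndex_injective : Function.Injective (polyIndex (F := F) (d := d)) :=
  Fin.val_injective.comp (Fintype.equivFin _).injective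

end Index

/-- The letters constrained by a clause. -/
def polyVar : PolyClause F d → Fin 3 → PolyPos F d
  | .inl (i, l, _, _) => ![.inr (i, l.castSucc), .inl l, .inr (i, l.succ)]
  | .inr (.inl i) => fun _ => .inr (i, 0)
  | .inr (.inr e) => fun _ => .inr (e.1, Fin.last d)

/-- The clause excluding a point from the graph. -/
def graphClause : F × F ↪ PolyClause F d := Function.Embedding.inr.trans Function.Embedding.inr

/-- The data predicates together with the points selecting them. -/
def graphEdb {EC ER E : Type} : DPred (PathConcept F (PolyClause F d) ⊕ EC) (ℕ ⊕ ER) E → ℕ →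
    Option (Finset (F × F))
  | .inl (.inl (.inl (.node 0))), 1 => some ∅
  | .inl (.inl (.inl (.clause 0 (.inr (.inr e))))), 1 => some {e}
  | _, _ => none

theorem graphEdb_eq_some {EC ER E : Type}
    {p : DPred (PathConcept F (PolyClause F d) ⊕ EC) (ℕ ⊕ ER) E} {k : ℕ} {m : Finset (F × F)}
    (h : graphEdb p k = some m) : k = 1 ∧ ((p = .inl (.inl (.inl (.node 0))) ∧ m = ∅) ∨
      ∃ e, p = .inl (.inl (.inl (.clause 0 (graphClause e)))) ∧ m = {e}) := by
  unfold graphEdb at h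
  split at h
  · exact ⟨rfl, .inl ⟨rfl, (Option.some.inj h).symm⟩⟩
  · exact ⟨rfl, .inr ⟨_, rfl, (Option.some.inj h).symm⟩⟩
  · exact absurd h (by simp)

theorem forall_graphEdb_iff {EK EC ER E : Type} (x : Finset (F × F))
    (M : DInterp (Unit ⊕ EK) (DPred (PathConcept F (PolyClause F d) ⊕ EC) (ℕ ⊕ ER) E)) :
    (∀ p k m, graphEdb p k = some m → m ⊆ x →
      M.pred p (List.replicate k (M.ind (.inl ())))) ↔
      ∀ g ∈ pathABox EK EC ER (x.map graphClause), g.semD M := by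
  simp only [pathABox, List.forall_mem_cons, List.forall_mem_map, Finset.mem_toList,
    Finset.forall_mem_map]
  constructor
  · intro h
    exact ⟨h (.inl (.inl (.inl (.node 0)))) 1 ∅ rfl (Finset.empty_subset x), fun e he =>
      h (.inl (.inl (.inl (.clause 0 (graphClause e))))) 1 {e} rfl
        (Finset.singleton_subset_iff.2 he)⟩
  · rintro ⟨h₁, h₂⟩ p k m hm hmx
    obtain ⟨rfl, ⟨rfl, rfl⟩ | ⟨e, rfl, rfl⟩⟩ := graphEdb_eq_some hm
    · exact h₁
    · exact h₂ e (Finset.singleton_subset_iff.1 hmx)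

variable [Field F]

/-- The constraints of a clause. -/
def polyLit : PolyClause F d → Fin 3 → F → Prop
  | .inl (i, _, u, v) => ![fun σ => σ ≠ u, fun σ => σ ≠ v, fun σ => σ = u * i + v]
  | .inr (.inl _) => fun _ σ => σ = 0
  | .inr (.inr e) => fun _ σ => σ ≠ e.2

theorem exists_sat_iff_polyGraph_subset [Fintype F] [DecidableEq F] (x : Finset (F × F)) :
    (∃ y : ℕ → F, ∀ j : PolyClause F d, j ∈ x.map graphClause ∨
      ∃ t, polyLit j t (y (polyIndex (polyVar j t)))) ↔ ∃ a : Fin d → F, polyGraph a ⊆ x := by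
  constructor
  · rintro ⟨y, hy⟩
    refine ⟨fun l => y (polyIndex (.inl l : PolyPos F d)), fun e he => ?_⟩
    rw [mem_polyGraph] at he
    have hval : ∀ l (hl : l < d + 1), y (polyIndex (.inr (e.1, ⟨l, hl⟩) : PolyPos F d)) =
        hornerVal (extendZero fun l => y (polyIndex (.inl l : PolyPos F d))) e.1 l := by
      intro l
      induction l with
      | zero =>
        intro _
        have h := hy (.inr (.inl e.1))
        simpa [graphClause, polyLit, polyVar, hornerVal] using h
      | succ l ih =>
        intro hl
        have hld : l < d := by omega
        have h := hy (.inl (e.1, ⟨l, hld⟩, y (polyIndex (.inr (e.1, ⟨l, by omega⟩) : PolyPos F d)),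
          y (polyIndex (.inl ⟨l, hld⟩ : PolyPos F d))))
        simp [graphClause, polyLit, polyVar, Fin.exists_fin_succ] at h
        rw [hornerVal, ← ih (by omega), h]
        simp [extendZero, hld]
    have h := hy (.inr (.inr e))
    simp only [graphClause, polyLit, polyVar] at h
    have hlast := hval d (by omega)
    rw [he] at hlast
    rcases h with h | ⟨-, h⟩
    · simpa using h
    · exact absurd hlast h
  · rintro ⟨a, ha⟩
    refine ⟨Function.extend polyIndex (Sum.elim a fun e : F × Fin (d + 1) =>
      hornerVal (extendZero a) e.1 e.2) 0, fun j => ?_⟩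
    simp only [polyIndex_injective.extend_apply]
    rcases j with ⟨i, l, u, v⟩ | i | e
    · right
      by_cases hu : hornerVal (extendZero a) i l = u
      · by_cases hv : a l = v
        · refine ⟨2, ?_⟩
          simp [polyLit, polyVar, hornerVal, hu, ← hv, extendZero]
        · exact ⟨1, by simpa [polyLit, polyVar] using hv⟩
      · exact ⟨0, by simpa [polyLit, polyVar] using hu⟩
    · exact Or.inr ⟨0, by simp [polyLit, polyVar, hornerVal]⟩
    · by_cases he : hornerVal (extendZero a) e.1 d = e.2
      · exact Or.inl (Finset.mem_map_of_mem graphClause (ha ((mem_polyGraph a e).2 he)))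
      · exact Or.inr ⟨0, by simpa [polyLit, polyVar] using he⟩

variable (F d) in
/-- The TBox of the encoding of polynomial evaluation. -/
noncomputable def polyTBox [Fintype F] : List (Ax (PathConcept F (PolyClause F d)) ℕ) :=
  pathTBox (Fintype.card (PolyPos F d)) (fun j t => polyIndex (polyVar j t)) polyLit

variable (F d) in
/-- The query of the encoding of polynomial evaluation. -/
noncomputable def polyCQ [Fintype F] : CQ Unit (PathConcept F (PolyClause F d)) ℕ :=
  pathCQ F (PolyClause F d) (Fintype.card (PolyPos F d))

theorem entails_poly_iff [Fintype F] [DecidableEq F] (EK EC ER : Type) (x : Finset (F × F)) :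
    Entails ((polyTBox F d).map (Ax.map Sum.inl Sum.inl))
      (pathABox EK EC ER (x.map graphClause)) (CQ.map Sum.inl Sum.inl Sum.inl (polyCQ F d)) ↔
      ∃ a : Fin d → F, polyGraph a ⊆ x := by
  rw [polyTBox, polyCQ, entails_pathABox_iff EK EC ER (fun j t => polyIndex_lt _),
    exists_sat_iff_polyGraph_subset]

theorem two_pow_le_of_isNDLRewriting [Fintype F] [DecidableEq F] {EK EC ER E : Type} {w : ℕ}
    (hw : 30 ≤ w) (hF₁ : 4 * w ^ 5 ≤ Fintype.card F) (hF₂ : Fintype.card F ≤ 8 * w ^ 5)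
    {Prog : DProgram (Unit ⊕ EK) (DPred (PathConcept F (PolyClause F (w ^ 2)) ⊕ EC) (ℕ ⊕ ER) E)}
    {G : DPred (PathConcept F (PolyClause F (w ^ 2)) ⊕ EC) (ℕ ⊕ ER) E}
    (h : IsNDLRewriting ((polyTBox F (w ^ 2)).map (Ax.map Sum.inl Sum.inl))
      (CQ.map Sum.inl Sum.inl Sum.inl (polyCQ F (w ^ 2))) Prog G) :
    2 ^ w ^ 2 ≤ 2 * Prog.length := by
  obtain ⟨hsafe, hrec, hrew⟩ := h
  have hw2 : 2 ≤ w ^ 2 := by nlinarith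
  obtain ⟨D, C, hD, hDr, hC, hCs, hcover⟩ := ndl_approximation hsafe hrec (.inl ()) G (w ^ 2)
    (w ^ 2) hw2 hw2 graphEdb fun p k m hm => by
      obtain ⟨-, ⟨-, rfl⟩ | ⟨e, -, rfl⟩⟩ := graphEdb_eq_some hm <;> simp
  simp only [forall_graphEdb_iff] at hcover
  have hpos : 0 < (w ^ 2) ^ w ^ 2 := by positivity
  refine le_of_mul_le_mul_right ?_ hpos
  rw [← mul_pow]
  rcases hcover with hcover | ⟨m₀, hm₀, hcover⟩
  · have hle := pow_le_card_of_cover_polyGraph hDr fun a => hcover _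
      ((hrew _).1 ((entails_poly_iff EK EC ER _).2 ⟨a, subset_rfl⟩))
    have hp : 2 * w ^ 2 ≤ Fintype.card F := by
      refine le_trans ?_ hF₁
      have := Nat.pow_le_pow_right (show 0 < w by omega) (show 2 ≤ 5 by norm_num)
      omega
    calc (2 * w ^ 2) ^ w ^ 2 ≤ Fintype.card F ^ w ^ 2 := Nat.pow_le_pow_left hp _
      _ ≤ Prog.length * (w ^ 2) ^ w ^ 2 := hle.trans hD
      _ ≤ 2 * Prog.length * (w ^ 2) ^ w ^ 2 := Nat.mul_le_mul_right _ (by omega)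
  · have hle := pow_le_card_of_cover_nonmembers (M := 2 * w ^ 2) (by omega) hCs hm₀.le
      (fun x hx hneg => by
        have hD' := mt (hrew _).2 (mt (entails_poly_iff EK EC ER x).1 (not_exists.2 hneg))
        simp only [DEntails, not_forall] at hD'
        obtain ⟨M, hM, hA, hG⟩ := hD'
        exact hcover x hx M hM hA hG)
      (deletion_bound hw hF₁ hF₂)
    calc (2 * w ^ 2) ^ w ^ 2 ≤ 2 * C.card := hle
      _ ≤ 2 * (Prog.length * (w ^ 2) ^ w ^ 2) := Nat.mul_le_mul_left _ hC
      _ = 2 * Prog.length * (w ^ 2) ^ w ^ 2 := by ring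

theorem card_polyPos_le [Fintype F] (hd : 1 ≤ d) :
    Fintype.card (PolyPos F d) ≤ 3 * (Fintype.card F * d) := by
  have hp : 0 < Fintype.card F := Fintype.card_pos
  simp only [Fintype.card_sum, Fintype.card_prod, Fintype.card_fin]
  nlinarith [Nat.mul_le_mul_right d hp, Nat.mul_le_mul_left (Fintype.card F) hd]

theorem card_polyClause_le [Fintype F] (hd : 1 ≤ d) :
    Fintype.card (PolyClause F d) ≤ 3 * (Fintype.card F ^ 3 * d) := by
  have hp : 1 ≤ Fintype.card F := Fintype.card_pos
  have h₁ : Fintype.card F ≤ Fintype.card F ^ 3 * d := by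
    calc Fintype.card F = Fintype.card F ^ 1 * 1 := by ring
      _ ≤ _ := Nat.mul_le_mul (Nat.pow_le_pow_right hp (by norm_num)) hd
  have h₂ : Fintype.card F ^ 2 ≤ Fintype.card F ^ 3 * d := by
    calc Fintype.card F ^ 2 = Fintype.card F ^ 2 * 1 := by ring
      _ ≤ _ := Nat.mul_le_mul (Nat.pow_le_pow_right hp (by norm_num)) hd
  simp only [Fintype.card_sum, Fintype.card_prod, Fintype.card_fin]
  calc _ = Fintype.card F ^ 3 * d + (Fintype.card F + Fintype.card F ^ 2) := by ring
    _ ≤ _ := by omega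

theorem tbSize_polyTBox_le [Fintype F] (hd : 1 ≤ d) :
    tbSize (polyTBox F d) ≤ 96 * (Fintype.card F ^ 4 * d ^ 2) := by
  have hp : 1 ≤ Fintype.card F := Fintype.card_pos
  have hL := card_polyPos_le (F := F) hd
  have hJ := card_polyClause_le (F := F) hd
  refine (tbSize_pathTBox_le _ _ _).trans ?_
  generalize Fintype.card (PolyPos F d) = L at *
  generalize Fintype.card (PolyClause F d) = J at *
  generalize Fintype.card F = p at *
  have h₁ : p ^ 2 * d ≤ p ^ 4 * d ^ 2 :=
    Nat.mul_le_mul (Nat.pow_le_pow_right hp (by norm_num)) (Nat.le_self_pow (by norm_num) d)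
  have h₂ : p ^ 4 * d ≤ p ^ 4 * d ^ 2 :=
    Nat.mul_le_mul_left _ (Nat.le_self_pow (by norm_num) d)
  calc L * (p * 8) + J * (3 * (p * 3)) + J * (L * 5)
      ≤ 3 * (p * d) * (p * 8) + 3 * (p ^ 3 * d) * (3 * (p * 3)) +
        3 * (p ^ 3 * d) * (3 * (p * d) * 5) := by gcongr
    _ = 24 * (p ^ 2 * d) + 27 * (p ^ 4 * d) + 45 * (p ^ 4 * d ^ 2) := by ring
    _ ≤ _ := by omega

theorem cqSize_polyCQ_le [Fintype F] (hd : 1 ≤ d) :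
    cqSize (polyCQ F d) ≤ 96 * (Fintype.card F ^ 4 * d ^ 2) := by
  have hp : 1 ≤ Fintype.card F := Fintype.card_pos
  have hL := card_polyPos_le (F := F) hd
  have hJ := card_polyClause_le (F := F) hd
  refine (cqSize_pathCQ_le _).trans ?_
  generalize Fintype.card (PolyPos F d) = L at *
  generalize Fintype.card (PolyClause F d) = J at *
  generalize Fintype.card F = p at *
  have h₀ : 1 ≤ p ^ 4 * d ^ 2 := Nat.mul_le_mul (Nat.one_le_pow _ _ hp) (Nat.one_le_pow _ _ hd)
  have h₁ : p * d ≤ p ^ 4 * d ^ 2 :=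
    Nat.mul_le_mul (Nat.le_self_pow (by norm_num) p) (Nat.le_self_pow (by norm_num) d)
  have h₂ : p ^ 3 * d ≤ p ^ 4 * d ^ 2 :=
    Nat.mul_le_mul (Nat.pow_le_pow_right hp (by norm_num)) (Nat.le_self_pow (by norm_num) d)
  calc (2 + L * 3) + J * (2 + L * 3)
      ≤ (2 + 3 * (p * d) * 3) + 3 * (p ^ 3 * d) * (2 + 3 * (p * d) * 3) := by gcongr
    _ = 2 + 9 * (p * d) + 6 * (p ^ 3 * d) + 27 * (p ^ 4 * d ^ 2) := by ring
    _ ≤ _ := by omega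

end PolyClauses

theorem exists_pow_le_lt_pow {m n k : ℕ} (hk : k ≠ 0) (hm : m ^ k ≤ n) :
    ∃ w, m ≤ w ∧ w ^ k ≤ n ∧ n < (w + 1) ^ k := by
  have hex : ∃ w, n < (w + 1) ^ k :=
    ⟨n, (Nat.lt_succ_self n).trans_le (Nat.le_self_pow hk _)⟩
  have hlt := Nat.find_spec hex
  refine ⟨Nat.find hex, ?_, ?_, hlt⟩
  · have := lt_of_pow_lt_pow_left₀ k (Nat.zero_le _) (hm.trans_lt hlt)
    omega
  · rcases hw : Nat.find hex with _ | w
    · simp [zero_pow hk]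
    · exact not_lt.1 (Nat.find_min hex (by omega : w < Nat.find hex))

theorem rpow_div_logb_le {n m : ℕ} (hn : 2 ≤ n) (hnm : n ≤ (m ^ 2) ^ 12) :
    ((n : ℝ) / Real.logb 2 (n : ℝ)) ^ ((1 : ℝ) / 12) ≤ (m : ℝ) ^ 2 := by
  have hn2 : (2 : ℝ) ≤ n := by exact_mod_cast hn
  have hlog : 1 ≤ Real.logb 2 (n : ℝ) := by
    rw [Real.le_logb_iff_rpow_le (by norm_num) (by linarith only [hn2])]
    simpa using hn2
  calc ((n : ℝ) / Real.logb 2 (n : ℝ)) ^ ((1 : ℝ) / 12)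
      ≤ (((m : ℝ) ^ 2) ^ (12 : ℕ)) ^ ((1 : ℝ) / 12) := by
        refine Real.rpow_le_rpow (by positivity) ?_ (by norm_num)
        exact (div_le_self (by positivity) hlog).trans (by exact_mod_cast hnm)
    _ = (m : ℝ) ^ 2 := by
        have h := Real.pow_rpow_inv_natCast (x := (m : ℝ) ^ 2) (n := 12) (by positivity)
          (by norm_num)
        rwa [Nat.cast_ofNat, ← one_div] at h

theorem eighth_mul_le {w : ℕ} (hw : 30 ≤ w) {r : ℝ} (hr : r ≤ ((w + 1 : ℕ) : ℝ) ^ 2) :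
    1 / 8 * r ≤ ((w ^ 2 - 1 : ℕ) : ℝ) := by
  have hw' : (30 : ℝ) ≤ w := by exact_mod_cast hw
  rw [Nat.cast_sub (Nat.one_le_pow _ _ (by omega))]
  push_cast at hr ⊢
  nlinarith

theorem two_pow_pred_le {a b : ℕ} (ha : 1 ≤ a) (h : 2 ^ a ≤ 2 * b) : 2 ^ (a - 1) ≤ b := by
  obtain ⟨k, rfl⟩ : ∃ k, a = k + 1 := ⟨a - 1, by omega⟩
  rw [pow_succ] at h
  rw [Nat.add_sub_cancel]
  omega

theorem length_le_progSize {K PV : Type} (Prog : DProgram K PV) :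
    Prog.length ≤ progSize Prog := by
  induction Prog with
  | nil => simp [progSize]
  | cons cl Prog ih =>
    rw [progSize, List.map_cons, List.sum_cons, List.length_cons]
    have : 1 ≤ cl.size := by rw [DClause.size]; omega
    rw [progSize] at ih
    omega

end QRew

namespace QRew

/-- There exist constants `c > 0` and `ε > 0` and, for each
`n ≥ 1`, a conjunctive query `q_n` and an OWL 2 QL TBox `T_n` with
`|q_n| ≤ c·n` and `|T_n| ≤ c·n`, such that for all sufficiently large `n`,
every NDL-rewriting for `q_n` and `T_n` over any signature containing the
symbols of `q_n` and `T_n` (formalised as their signature extended by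
arbitrary further constants `EK`, concept names `EC` and role names `ER`;
the program may use arbitrary further predicates `E`) has size at least
`2^{ε·(n/log n)^{1/12}}`. -/
theorem statement14 :
    ∃ (c : ℕ) (ε : ℝ) (n₀ : ℕ), 0 < c ∧ 0 < ε ∧
      ∀ n : ℕ, 1 ≤ n →
        ∃ (CN RN : Type) (T : List (Ax CN RN)) (q : CQ Unit CN RN),
          tbSize T ≤ c * n ∧ cqSize q ≤ c * n ∧
          (n₀ ≤ n →
            ∀ (EK EC ER E : Type)
              (Prog : DProgram (Unit ⊕ EK) (DPred (CN ⊕ EC) (RN ⊕ ER) E))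
              (G : DPred (CN ⊕ EC) (RN ⊕ ER) E),
              IsNDLRewriting (T.map (Ax.map Sum.inl Sum.inl))
                (q.map Sum.inl Sum.inl Sum.inl) Prog G →
              (2 : ℝ) ^ (ε * ((n : ℝ) / Real.logb 2 (n : ℝ)) ^ ((1 : ℝ) / 12)) ≤
                (progSize Prog : ℝ)) := by
  refine ⟨393216, 1 / 8, 30 ^ 24, by norm_num, by norm_num, fun n _ => ?_⟩
  by_cases hn : 30 ^ 24 ≤ n
  swap
  · exact ⟨Unit, Unit, [], [], by simp [tbSize], by simp [cqSize], fun h => absurd h hn⟩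
  obtain ⟨w, hw, hwn, hnw⟩ : ∃ w, 30 ≤ w ∧ w ^ 24 ≤ n ∧ n < (w + 1) ^ 24 :=
    exists_pow_le_lt_pow (by norm_num) hn
  obtain ⟨p, hp, hp₁, hp₂⟩ := Nat.exists_prime_lt_and_le_two_mul (4 * w ^ 5) (by positivity)
  have := Fact.mk hp
  have hp₂ : p ≤ 8 * w ^ 5 := by omega
  have hsize : 96 * (Fintype.card (ZMod p) ^ 4 * (w ^ 2) ^ 2) ≤ 393216 * n := by
    rw [ZMod.card]
    calc 96 * (p ^ 4 * (w ^ 2) ^ 2) ≤ 96 * ((8 * w ^ 5) ^ 4 * (w ^ 2) ^ 2) := by gcongr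
      _ = 393216 * w ^ 24 := by ring
      _ ≤ 393216 * n := by gcongr
  have hw2 : 1 ≤ w ^ 2 := Nat.one_le_pow _ _ (by omega)
  refine ⟨_, _, polyTBox (ZMod p) (w ^ 2), polyCQ (ZMod p) (w ^ 2),
    (tbSize_polyTBox_le hw2).trans hsize, (cqSize_polyCQ_le hw2).trans hsize, ?_⟩
  intro _ EK EC ER E Prog G hrew
  have hprog : 2 ^ w ^ 2 ≤ 2 * progSize Prog :=
    (two_pow_le_of_isNDLRewriting hw (by rw [ZMod.card]; exact hp₁.le)
      (by rw [ZMod.card]; exact hp₂) hrew).trans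
      (Nat.mul_le_mul_left 2 (length_le_progSize Prog))
  calc (2 : ℝ) ^ (1 / 8 * ((n : ℝ) / Real.logb 2 (n : ℝ)) ^ ((1 : ℝ) / 12))
      ≤ (2 : ℝ) ^ ((w ^ 2 - 1 : ℕ) : ℝ) :=
        Real.rpow_le_rpow_of_exponent_le (by norm_num)
          (eighth_mul_le hw (rpow_div_logb_le (le_trans (by norm_num) hn)
            (hnw.le.trans_eq (pow_mul _ 2 12))))
    _ = ((2 ^ (w ^ 2 - 1) : ℕ) : ℝ) := by rw [Real.rpow_natCast]; push_cast; rfl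
    _ ≤ (progSize Prog : ℝ) := by exact_mod_cast two_pow_pred_le hw2 hprog

end QRew
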